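/- arXiv:math/9903030 — 6 statements merged into one kernel-verified Lean document; each statement's English description precedes it below -/
import Mathlib

section
/- Let s ≥ 1, l ≥ 2, t ≥ 1, let I be a two-sided ideal of F_s minimally generated by a set of t homogeneous elements of degree l, and let R = F_s/I with a_n = dim_k R_n. Then the series Σ_{n≥0} a_n·s^{−n} converges, and t ≥ s^l / (Σ_{n≥0} a_n·s^{−n}). -/
open scoped ENNReal NNReal
open PowerSeries

noncomputable section

/-- The degree-`n` homogeneous component of the free algebra `k⟨X⟩`
(standard grading: each generator has degree 1). -/
def freeDeg (k : Type) [Field k] (X : Type) (n : ℕ) : Submodule k (FreeAlgebra k X) :=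
  (Submodule.span k (Set.range (FreeAlgebra.ι k)) : Submodule k (FreeAlgebra k X)) ^ n

/-- The two-sided ideal generated by a set `S`, as a `k`-submodule. -/
def idealGen (k : Type) [Field k] {A : Type} [Ring A] [Algebra k A] (S : Set A) :
    Submodule k A :=
  Submodule.span k {x : A | ∃ a b : A, ∃ s ∈ S, x = a * s * b}

/-- The dimension of the `n`-th component of the quotient of a graded algebra
(with components `𝒜`) by a homogeneous ideal `I`, i.e. `dim (𝒜 n / (I ∩ 𝒜 n))`. -/
def quotDim (k : Type) [Field k] {A : Type} [Ring A] [Algebra k A]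
    (𝒜 : ℕ → Submodule k A) (I : Submodule k A) (n : ℕ) : ℕ :=
  Module.finrank k (↥(𝒜 n) ⧸ (I.comap (𝒜 n).subtype))

/-- The radius of convergence of the power series `Σ a_n t^n`, as an element of `[0,∞]`. -/
def hradius (a : ℕ → ℝ) : ℝ≥0∞ :=
  ⨆ (r : ℝ≥0) (_ : Summable fun n => |a n| * (r : ℝ) ^ n), (r : ℝ≥0∞)

end
section
variable {k : Type} [Field k]
theorem gg_mul_finrank {A : Type} [Ring A] [Algebra k A] (M N : Submodule k A) [Module.Finite k M]
    [Module.Finite k N] : Module.finrank k (M * N : Submodule k A) ≤ Module.finrank k M * Module.finrank k N := by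
  have h : (M * N : Submodule k A) = LinearMap.range (M.mulMap N) := by
    rw [Submodule.mulMap_range]
  rw [h, ← Module.finrank_tensorProduct (R := k)]
  exact LinearMap.finrank_range_le _

theorem gg_compl {A : Type} [AddCommGroup A] [Module k A] (J V : Submodule k A) [Module.Finite k V]
    (h : J ≤ V) : ∃ C : Submodule k A, J ⊔ C = V ∧ C ≤ V ∧
      Module.finrank k J + Module.finrank k C = Module.finrank k V := by
  obtain ⟨D, hD⟩ := Submodule.exists_isCompl J
  have h1 : J ⊔ (D ⊓ V) = V := by
    rw [← sup_inf_assoc_of_le D h, hD.sup_eq_top, top_inf_eq]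
  refine ⟨D ⊓ V, h1, inf_le_right, ?_⟩
  have : Module.Finite k J := Submodule.finiteDimensional_of_le h
  have : Module.Finite k (D ⊓ V : Submodule k A) := Submodule.finiteDimensional_of_le inf_le_right
  have h2 := Submodule.finrank_sup_add_finrank_inf_eq J (D ⊓ V)
  have h3 : J ⊓ (D ⊓ V) = ⊥ := by
    rw [← inf_assoc, hD.inf_eq_bot, bot_inf_eq]
  rw [h1, h3, finrank_bot] at h2
  omega

open Polynomial in
/-- the grading homomorphism -/
noncomputable def ggPhi (k : Type) [Field k] (s : ℕ) : FreeAlgebra k (Fin s) →ₐ[k] Polynomial (FreeAlgebra k (Fin s)) :=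
  FreeAlgebra.lift k (fun i => Polynomial.monomial 1 (FreeAlgebra.ι k i))

theorem ggPhi_deg (s n : ℕ) (x : FreeAlgebra k (Fin s)) (hx : x ∈ freeDeg k (Fin s) n) :
    ggPhi k s x = Polynomial.monomial n x := by
  unfold freeDeg at hx
  induction n generalizing x with
  | zero =>
    rw [pow_zero, Submodule.mem_one] at hx
    obtain ⟨c, rfl⟩ := hx
    rw [AlgHom.commutes]; rfl
  | succ n ih =>
    rw [pow_succ] at hx
    induction hx using Submodule.mul_induction_on' with
    | mem_mul_mem a ha b hb =>
      rw [map_mul, ih a ha, ← Polynomial.monomial_mul_monomial]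
      congr 1
      induction hb using Submodule.span_induction with
      | mem x hx =>
        obtain ⟨i, rfl⟩ := hx
        simp [ggPhi]
      | zero => simp
      | add x y _ _ hx hy => simp [hx, hy]
      | smul c x _ hx => rw [map_smul, hx, Polynomial.smul_monomial]
    | add x _ y _ hx hy => simp [hx, hy]

noncomputable def ggPi (k : Type) [Field k] (s n : ℕ) : FreeAlgebra k (Fin s) →ₗ[k] FreeAlgebra k (Fin s) where
  toFun x := (ggPhi k s x).coeff n
  map_add' := by simp
  map_smul' := by simp

theorem ggPi_same (s n : ℕ) (x : FreeAlgebra k (Fin s)) (hx : x ∈ freeDeg k (Fin s) n) :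
    ggPi k s n x = x := by
  simp [ggPi, ggPhi_deg s n x hx]

theorem ggPi_ne (s n m : ℕ) (h : m ≠ n) (x : FreeAlgebra k (Fin s)) (hx : x ∈ freeDeg k (Fin s) m) :
    ggPi k s n x = 0 := by
  simp [ggPi, ggPhi_deg s m x hx, Polynomial.coeff_monomial, h]

theorem gg_top (s : ℕ) (x : FreeAlgebra k (Fin s)) : x ∈ ⨆ n, freeDeg k (Fin s) n := by
  have h1 : ∀ n, freeDeg k (Fin s) n ≤ ⨆ n, freeDeg k (Fin s) n := le_iSup _
  induction x using FreeAlgebra.induction with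
  | grade0 c => exact h1 0 (by simp [freeDeg, Submodule.mem_one])
  | grade1 i => exact h1 1 (by
      rw [freeDeg, pow_one]; exact Submodule.subset_span ⟨i, rfl⟩)
  | mul a b ha hb =>
    have : (⨆ n, freeDeg k (Fin s) n) * (⨆ n, freeDeg k (Fin s) n) ≤ ⨆ n, freeDeg k (Fin s) n := by
      rw [Submodule.iSup_mul]
      refine iSup_le fun i => ?_
      rw [Submodule.mul_iSup]
      refine iSup_le fun j => ?_
      refine le_trans (le_of_eq ?_) (h1 (i+j))
      simp only [freeDeg, pow_add]
    exact this (Submodule.mul_mem_mul ha hb)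
  | add a b ha hb => exact add_mem ha hb

noncomputable def ggWord (k : Type) [Field k] (s n : ℕ) (g : List.Vector (Fin s) n) : FreeAlgebra k (Fin s) :=
  FreeAlgebra.basisFreeMonoid k (Fin s) (FreeMonoid.ofList g.toList)

theorem gg_basis_apply (s : ℕ) (w : FreeMonoid (Fin s)) :
    FreeAlgebra.basisFreeMonoid k (Fin s) w = FreeMonoid.lift (FreeAlgebra.ι k) w := by
  simp [FreeAlgebra.basisFreeMonoid, FreeAlgebra.equivMonoidAlgebraFreeMonoid]

theorem gg_span (s n : ℕ) : freeDeg k (Fin s) n = Submodule.span k (Set.range (ggWord k s n)) := by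
  unfold freeDeg
  induction n with
  | zero =>
    rw [pow_zero, Submodule.one_eq_span]
    congr 1
    ext x
    simp only [Set.mem_singleton_iff, Set.mem_range, ggWord, gg_basis_apply]
    constructor
    · rintro rfl
      exact ⟨List.Vector.nil, by simp⟩
    · rintro ⟨y, rfl⟩
      rw [List.Vector.eq_nil y]; simp
  | succ n ih =>
    rw [pow_succ', ih, Submodule.span_mul_span]
    congr 1
    ext x
    simp only [Set.mem_mul, Set.mem_range, ggWord, gg_basis_apply]
    constructor
    · rintro ⟨_, ⟨i, rfl⟩, _, ⟨y, rfl⟩, rfl⟩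
      exact ⟨i ::ᵥ y, by simp⟩
    · rintro ⟨y, rfl⟩
      obtain ⟨i, z, rfl⟩ := y.exists_eq_cons
      exact ⟨_, ⟨i, rfl⟩, _, ⟨z, rfl⟩, by simp⟩

theorem gg_finrank (s n : ℕ) : Module.finrank k (freeDeg k (Fin s) n) = s ^ n := by
  rw [gg_span, finrank_span_eq_card]
  · simp
  · exact (FreeAlgebra.basisFreeMonoid k (Fin s)).linearIndependent.comp
      (fun g : List.Vector (Fin s) n => FreeMonoid.ofList g.toList)
      (fun a b h => List.Vector.toList_injective (FreeMonoid.ofList.injective h))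

instance gg_fin (s n : ℕ) : Module.Finite k (freeDeg k (Fin s) n) := by
  rw [gg_span]
  exact Module.Finite.span_of_finite k (Set.finite_range _)
end

theorem gg_analytic (s l t : ℕ) (hs : 1 ≤ s) (hl : 2 ≤ l) (a : ℕ → ℕ) (h0 : a 0 = 1)
    (hle : ∀ n, a n ≤ s ^ n)
    (h1 : ∀ n, n + 1 < l → s * a n ≤ a (n+1))
    (h2 : ∀ n m, n + 1 = m + l → s * a n ≤ a (n+1) + t * a m)
    (h3 : ∀ n, a (n+l) ≤ a n * (s^l - 1)) :
    Summable (fun n => (a n : ℝ) * ((s : ℝ)⁻¹) ^ n) ∧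
    (s : ℝ) ^ l / (∑' n, (a n : ℝ) * ((s : ℝ)⁻¹) ^ n) ≤ (t : ℝ) := by
  have hs0 : (0:ℝ) < s := by exact_mod_cast hs
  have hsl : (0:ℝ) < (s:ℝ)^l := by positivity
  obtain ⟨b, hb⟩ : ∃ b : ℕ → ℝ, b = fun n => (a n : ℝ) * ((s : ℝ)⁻¹) ^ n := ⟨_, rfl⟩
  have hbn : ∀ n, b n * (s:ℝ)^n = a n := by
    intro n; rw [hb]; simp only [inv_pow]; field_simp
  have hpos : ∀ n, 0 ≤ b n := by intro n; rw [hb]; positivity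
  have hb1 : ∀ n, b n ≤ 1 := by
    intro n
    have : (a n : ℝ) ≤ (s:ℝ)^n := by exact_mod_cast hle n
    rw [← hbn] at this
    have h : 0 < (s:ℝ)^n := by positivity
    nlinarith
  have hb0 : b 0 = 1 := by simp [hb, h0]
  rw [← hb]
  have hsum : Summable b := by
    refine summable_of_sum_range_le (c := l * s^l) hpos fun N => ?_
    have hr : ∀ n, b (n+l) * (s:ℝ)^l ≤ b n * ((s:ℝ)^l - 1) := by
      intro n
      have h : (a (n+l) : ℝ) ≤ a n * ((s:ℝ)^l - 1) := by
        have := h3 n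
        have h' : 1 ≤ s^l := Nat.one_le_pow _ _ hs
        zify [h'] at this
        exact_mod_cast this
      rw [← hbn, ← hbn, pow_add] at h
      have h' : 0 < (s:ℝ)^n := by positivity
      refine le_of_mul_le_mul_right ?_ h'
      linarith
    have e1 : ∑ i ∈ Finset.range (N + l), b i = ∑ i ∈ Finset.range l, b i + ∑ i ∈ Finset.range N, b (i+l) := by
      rw [add_comm N l, Finset.sum_range_add]
      simp [add_comm]
    have e2 : ∑ i ∈ Finset.range N, b i ≤ ∑ i ∈ Finset.range (N + l), b i :=
      Finset.sum_le_sum_of_subset_of_nonneg (by intro; simp; omega) (fun i _ _ => hpos i)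
    have e3 : ∑ i ∈ Finset.range l, b i ≤ l := by
      simpa using Finset.sum_le_sum (s := Finset.range l) (fun i _ => hb1 i)
    have e4 : (∑ i ∈ Finset.range N, b (i+l)) * (s:ℝ)^l ≤ (∑ i ∈ Finset.range N, b i) * ((s:ℝ)^l - 1) := by
      rw [Finset.sum_mul, Finset.sum_mul]
      exact Finset.sum_le_sum fun i _ => hr i
    nlinarith
  refine ⟨hsum, ?_⟩
  have key : ∀ N, (s:ℝ)^l ≤ b N * (s:ℝ)^l + t * ∑ i ∈ Finset.range (N+1-l), b i := by
    intro N
    induction N with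
    | zero => rw [show 0 + 1 - l = 0 by omega]; simp [hb0]
    | succ N ih =>
      have hN : 0 < (s:ℝ)^(N+1) := by positivity
      by_cases hc : N + 1 < l
      · rw [show N + 1 + 1 - l = 0 by omega]
        rw [show N + 1 - l = 0 by omega] at ih
        have : (s:ℝ) * a N ≤ a (N+1) := by exact_mod_cast h1 N hc
        rw [← hbn, ← hbn] at this
        have : b N ≤ b (N+1) := by
          refine le_of_mul_le_mul_right ?_ hN
          calc _ = s * (b N * (s:ℝ)^N) := by ring
            _ ≤ _ := this
        simp at ih ⊢
        nlinarith
      · obtain ⟨m, hm⟩ : ∃ m, N + 1 = m + l := ⟨N+1-l, by omega⟩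
        rw [show N + 1 + 1 - l = m + 1 by omega, Finset.sum_range_succ]
        rw [show N + 1 - l = m by omega] at ih
        have : (s:ℝ) * a N ≤ a (N+1) + t * a m := by exact_mod_cast h2 N m hm
        rw [← hbn, ← hbn, ← hbn] at this
        have : b N * (s:ℝ)^l ≤ b (N+1) * (s:ℝ)^l + t * b m := by
          have hm' : 0 < (s:ℝ)^m := by positivity
          refine le_of_mul_le_mul_right ?_ hm'
          calc _ = b N * (s:ℝ)^(m+l) := by ring
            _ = s * (b N * (s:ℝ)^N) := by rw [← hm]; ring
            _ ≤ _ := this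
            _ = _ := by rw [hm]; ring
        linarith
  have hlim : Filter.Tendsto (fun N => b N * (s:ℝ)^l + t * ∑' i, b i) Filter.atTop (nhds (0 * (s:ℝ)^l + t * ∑' i, b i)) :=
    (hsum.tendsto_atTop_zero.mul_const _).add_const _
  have hfin : (s:ℝ)^l ≤ 0 * (s:ℝ)^l + t * ∑' i, b i := by
    refine ge_of_tendsto' hlim fun N => (key N).trans ?_
    gcongr
    exact hsum.sum_le_tsum _ (fun i _ => hpos i)
  have hS : 0 < ∑' i, b i := by
    have := hsum.le_tsum 0 (fun i _ => hpos i)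
    linarith
  rw [div_le_iff₀ hS]
  linarith

/-- the components of the ideal generated by `A` in degree `l`, built recursively -/
noncomputable def ggJ (k : Type) [Field k] (s l : ℕ) (S : Submodule k (FreeAlgebra k (Fin s))) :
    ℕ → Submodule k (FreeAlgebra k (Fin s))
  | 0 => ⊥
  | n + 1 => ggJ k s l S n * freeDeg k (Fin s) 1 ⊔
      (if l ≤ n + 1 then freeDeg k (Fin s) (n + 1 - l) * S else ⊥)

section
variable {k : Type} [Field k] {s l : ℕ} {S : Submodule k (FreeAlgebra k (Fin s))}

theorem gg_deg_add (m n : ℕ) :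
    freeDeg k (Fin s) m * freeDeg k (Fin s) n = freeDeg k (Fin s) (m + n) := by
  simp only [freeDeg, pow_add]

theorem ggJ_le (hS : S ≤ freeDeg k (Fin s) l) (n : ℕ) : ggJ k s l S n ≤ freeDeg k (Fin s) n := by
  induction n with
  | zero => exact bot_le
  | succ n ih =>
    rw [ggJ]
    refine sup_le ?_ ?_
    · rw [← gg_deg_add]
      exact mul_le_mul' ih le_rfl
    · split_ifs with h
      · refine (mul_le_mul' le_rfl hS).trans ?_
        rw [gg_deg_add, Nat.sub_add_cancel h]
      · exact bot_le

theorem ggJ_mul (n m : ℕ) : ggJ k s l S n * freeDeg k (Fin s) m ≤ ggJ k s l S (n + m) := by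
  induction m with
  | zero => simp [freeDeg]
  | succ m ih =>
    rw [← gg_deg_add, ← mul_assoc, ← add_assoc, ggJ]
    exact (mul_le_mul' ih le_rfl).trans le_sup_left

theorem gg_mul_S (hl : 2 ≤ l) (m : ℕ) : freeDeg k (Fin s) m * S ≤ ggJ k s l S (m + l) := by
  obtain ⟨p, rfl⟩ : ∃ p, l = p + 1 := ⟨l - 1, by omega⟩
  rw [← add_assoc, ggJ, if_pos (by omega), show m + p + 1 - (p + 1) = m by omega]
  exact le_sup_right

theorem ggJ_low (n : ℕ) (h : n < l) : ggJ k s l S n = ⊥ := by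
  induction n with
  | zero => rfl
  | succ n ih =>
    rw [ggJ, ih (by omega), if_neg (by omega)]
    simp

theorem gg_ideal_inter (hl : 2 ≤ l) (α : Set (FreeAlgebra k (Fin s)))
    (hS : Submodule.span k α ≤ freeDeg k (Fin s) l) (n : ℕ) :
    idealGen k α ⊓ freeDeg k (Fin s) n = ggJ k s l (Submodule.span k α) n := by
  apply le_antisymm
  · rintro x ⟨hx, hxn⟩
    have hmain : idealGen k α ≤ (ggJ k s l (Submodule.span k α) n).comap (ggPi k s n) := by
      refine Submodule.span_le.2 ?_
      rintro _ ⟨a, b, f, hf, rfl⟩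
      have h1 : a * f * b ∈ (⨆ p, freeDeg k (Fin s) p) * Submodule.span k α *
          (⨆ q, freeDeg k (Fin s) q) :=
        Submodule.mul_mem_mul (Submodule.mul_mem_mul (gg_top s a) (Submodule.subset_span hf))
          (gg_top s b)
      refine (?_ : _ ≤ (ggJ k s l (Submodule.span k α) n).comap (ggPi k s n)) h1
      rw [Submodule.iSup_mul, Submodule.iSup_mul]
      refine iSup_le fun p => ?_
      rw [Submodule.mul_iSup]
      refine iSup_le fun q => ?_
      have h2 : freeDeg k (Fin s) p * Submodule.span k α * freeDeg k (Fin s) q ≤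
          ggJ k s l (Submodule.span k α) (p + l + q) :=
        (mul_le_mul' (gg_mul_S hl p) le_rfl).trans (ggJ_mul _ _)
      refine h2.trans fun y hy => ?_
      rw [Submodule.mem_comap]
      by_cases hn : p + l + q = n
      · rw [ggPi_same s n y (hn ▸ ggJ_le hS _ hy)]
        exact hn ▸ hy
      · rw [ggPi_ne s n _ hn y (ggJ_le hS _ hy)]
        exact zero_mem _
    have := hmain hx
    rwa [Submodule.mem_comap, ggPi_same s n x hxn] at this
  · refine le_inf ?_ (ggJ_le hS n)
    induction n with
    | zero => exact bot_le
    | succ n ih =>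
      rw [ggJ]
      refine sup_le ?_ ?_
      · refine (mul_le_mul' ih le_rfl).trans ?_
        rw [Submodule.mul_le]
        intro x hx y _
        induction hx using Submodule.span_induction with
        | mem x hx =>
          obtain ⟨a, b, f, hf, rfl⟩ := hx
          exact Submodule.subset_span ⟨a, b * y, f, hf, by simp only [mul_assoc]⟩
        | zero => rw [zero_mul]; exact zero_mem _
        | add x z _ _ hx hz => rw [add_mul]; exact add_mem hx hz
        | smul c x _ hx => rw [smul_mul_assoc]; exact Submodule.smul_mem _ _ hx
      · split_ifs
        · rw [Submodule.mul_le]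
          intro x _ y hy
          induction hy using Submodule.span_induction with
          | mem y hy => exact Submodule.subset_span ⟨x, 1, y, hy, by simp⟩
          | zero => rw [mul_zero]; exact zero_mem _
          | add y z _ _ hy hz => rw [mul_add]; exact add_mem hy hz
          | smul c y _ hy => rw [mul_smul_comm]; exact Submodule.smul_mem _ _ hy
        · exact bot_le

theorem gg_quotDim (hl : 2 ≤ l) (α : Set (FreeAlgebra k (Fin s)))
    (hS : Submodule.span k α ≤ freeDeg k (Fin s) l) (n : ℕ) :
    quotDim k (freeDeg k (Fin s)) (idealGen k α) n +
      Module.finrank k (ggJ k s l (Submodule.span k α) n) = s ^ n := by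
  have h1 : (idealGen k α).comap (freeDeg k (Fin s) n).subtype =
      (ggJ k s l (Submodule.span k α) n).comap (freeDeg k (Fin s) n).subtype := by
    rw [← gg_ideal_inter hl α hS n]
    ext x
    simp
  have h2 := (Submodule.comapSubtypeEquivOfLe (ggJ_le hS n)).finrank_eq
  rw [quotDim, h1, ← h2, Submodule.finrank_quotient_add_finrank, gg_finrank]

theorem ggJ_fin (hS : S ≤ freeDeg k (Fin s) l) (n : ℕ) : Module.Finite k (ggJ k s l S n) :=
  Submodule.finiteDimensional_of_le (ggJ_le hS n)

theorem gg_mul_fin (M N : Submodule k (FreeAlgebra k (Fin s))) [Module.Finite k M]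
    [Module.Finite k N] : Module.Finite k (M * N : Submodule k (FreeAlgebra k (Fin s))) :=
  Module.Finite.iff_fg.2 ((Module.Finite.iff_fg.1 ‹_›).mul (Module.Finite.iff_fg.1 ‹_›))

theorem gg_step (hl : 2 ≤ l) (hS : S ≤ freeDeg k (Fin s) l) (n m : ℕ) (hnm : n + 1 = m + l) :
    ∃ c, Module.finrank k (ggJ k s l S m) + c = s ^ m ∧
    Module.finrank k (ggJ k s l S (n + 1)) ≤
      Module.finrank k (ggJ k s l S n) * s + c * Module.finrank k S := by
  have := ggJ_fin hS n
  have := ggJ_fin hS m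
  have : Module.Finite k S := Submodule.finiteDimensional_of_le hS
  obtain ⟨C, hC, hCV, hdim⟩ := gg_compl _ _ (ggJ_le hS m)
  have : Module.Finite k C := Submodule.finiteDimensional_of_le hCV
  rw [gg_finrank] at hdim
  refine ⟨_, hdim, ?_⟩
  have h1 : ggJ k s l S (n + 1) ≤ ggJ k s l S n * freeDeg k (Fin s) 1 ⊔ C * S := by
    rw [ggJ, if_pos (by omega), show n + 1 - l = m by omega, ← hC, Submodule.sup_mul]
    refine sup_le le_sup_left (sup_le (le_trans ?_ le_sup_left) le_sup_right)
    obtain ⟨p, rfl⟩ : ∃ p, l = p + 1 := ⟨l - 1, by omega⟩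
    obtain rfl : n = m + p := by omega
    refine (mul_le_mul' le_rfl hS).trans ?_
    rw [← gg_deg_add, ← mul_assoc]
    exact mul_le_mul' (ggJ_mul _ _) le_rfl
  have := gg_mul_fin (ggJ k s l S n) (freeDeg k (Fin s) 1)
  have := gg_mul_fin C S
  refine (Submodule.finrank_mono h1).trans
    ((Submodule.finrank_add_le_finrank_add_finrank _ _).trans (add_le_add ?_ ?_))
  · have := gg_mul_finrank (ggJ k s l S n) (freeDeg k (Fin s) 1)
    rwa [gg_finrank, pow_one] at this
  · exact gg_mul_finrank C S

theorem gg_sub (hl : 2 ≤ l) (hS : S ≤ freeDeg k (Fin s) l) (n : ℕ) :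
    ∃ c d, Module.finrank k (ggJ k s l S n) + c = s ^ n ∧ Module.finrank k S + d = s ^ l ∧
    s ^ (n + l) ≤ Module.finrank k (ggJ k s l S (n + l)) + c * d := by
  have := ggJ_fin hS n
  have := ggJ_fin hS (n + l)
  obtain ⟨C, hC, hCV, hdim⟩ := gg_compl _ _ (ggJ_le hS n)
  obtain ⟨D, hD, hDV, hdimD⟩ := gg_compl _ _ hS
  have : Module.Finite k C := Submodule.finiteDimensional_of_le hCV
  have : Module.Finite k D := Submodule.finiteDimensional_of_le hDV
  rw [gg_finrank] at hdim hdimD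
  refine ⟨_, _, hdim, hdimD, ?_⟩
  have h1 : freeDeg k (Fin s) (n + l) ≤ ggJ k s l S (n + l) ⊔ C * D := by
    rw [← gg_deg_add]
    nth_rw 1 [← hC]
    rw [Submodule.sup_mul]
    refine sup_le ((ggJ_mul _ _).trans le_sup_left) ?_
    rw [← hD, Submodule.mul_sup]
    exact sup_le (((mul_le_mul' hCV le_rfl).trans (gg_mul_S hl n)).trans le_sup_left)
      le_sup_right
  have := gg_mul_fin C D
  rw [← gg_finrank (k := k) s (n + l)]
  exact (Submodule.finrank_mono h1).trans
    ((Submodule.finrank_add_le_finrank_add_finrank _ _).trans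
      (add_le_add le_rfl (gg_mul_finrank C D)))
end

/-- **Govorov's first inequality** (part of Theorem 3.1).  If `I ⊴ F_s` is minimally
generated by `t` homogeneous elements of degree `l` and `R = F_s/I` with `a n = dim R_n`,
then `Σ a_n s^{-n}` converges and `t ≥ s^l / Σ a_n s^{-n}`. -/
theorem stmt1 {k : Type} [Field k] (s l t : ℕ) (hs : 1 ≤ s) (hl : 2 ≤ l) (ht : 1 ≤ t)
    (α : Set (FreeAlgebra k (Fin s))) (hαfin : α.Finite) (hcard : α.ncard = t)
    (hdeg : ∀ f ∈ α, f ∈ freeDeg k (Fin s) l)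
    (I : Submodule k (FreeAlgebra k (Fin s)))
    (hgen : idealGen k α = I)
    (hmin : ∀ β ⊆ α, idealGen k β = I → β = α)
    (a : ℕ → ℕ) (ha : ∀ n, a n = quotDim k (freeDeg k (Fin s)) I n) :
    Summable (fun n => (a n : ℝ) * ((s : ℝ)⁻¹) ^ n) ∧
    (s : ℝ) ^ l / (∑' n, (a n : ℝ) * ((s : ℝ)⁻¹) ^ n) ≤ (t : ℝ) := by
  have hS : Submodule.span k α ≤ freeDeg k (Fin s) l := Submodule.span_le.2 hdeg
  have hq : ∀ n, a n + Module.finrank k (ggJ k s l (Submodule.span k α) n) = s ^ n := by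
    intro n
    rw [ha, ← hgen]
    exact gg_quotDim hl α hS n
  have hSt : Module.finrank k (Submodule.span k α) ≤ t := by
    rw [← hcard, Set.ncard_eq_toFinset_card α hαfin]
    have := finrank_span_finset_le_card (R := k) hαfin.toFinset
    rwa [Set.Finite.coe_toFinset] at this
  have hSfin : Module.Finite k (Submodule.span k α) := Submodule.finiteDimensional_of_le hS
  have hSpos : 1 ≤ Module.finrank k (Submodule.span k α) := by
    rw [Nat.one_le_iff_ne_zero]
    intro h0
    have hbot : Submodule.span k α = ⊥ := Submodule.finrank_eq_zero.1 h0
    rw [Submodule.span_eq_bot] at hbot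
    have he : idealGen k (∅ : Set (FreeAlgebra k (Fin s))) = I := by
      rw [← hgen]
      unfold idealGen
      trans ⊥
      · rw [Submodule.span_eq_bot]
        rintro x ⟨_, _, _, h, _⟩
        exact h.elim
      · symm
        rw [Submodule.span_eq_bot]
        rintro x ⟨_, _, f, hf, rfl⟩
        simp [hbot f hf]
    have := hmin ∅ (Set.empty_subset _) he
    rw [← this, Set.ncard_empty] at hcard
    omega
  refine gg_analytic s l t hs hl a ?_ (fun n => by have := hq n; omega) ?_ ?_ ?_
  · have := hq 0
    rw [ggJ_low 0 (by omega), finrank_bot] at this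
    simpa using this
  · intro n hn
    have h1 := hq n
    have h2 := hq (n + 1)
    rw [ggJ_low _ (by omega), finrank_bot] at h1 h2
    simp only [add_zero] at h1 h2
    rw [h1, h2, pow_succ']
  · intro n m hnm
    obtain ⟨c, hc, h⟩ := gg_step hl hS n m hnm
    have h1 := hq n
    have h2 := hq (n + 1)
    have h3 := hq m
    obtain rfl : c = a m := by omega
    rw [pow_succ, ← h1] at h2
    have := Nat.mul_le_mul_left (a m) hSt
    nlinarith
  · intro n
    obtain ⟨c, d, hc, hd, h⟩ := gg_sub hl hS n
    have h1 := hq n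
    have h2 := hq (n + l)
    obtain rfl : c = a n := by omega
    have : d ≤ s ^ l - 1 := by omega
    have := Nat.mul_le_mul_left (a n) this
    omega
end

section
/- Let s ≥ 1, l ≥ 2, t ≥ 1, let I be a two-sided ideal of F_s minimally generated by a set of t homogeneous elements of degree l, and let R = F_s/I with a_n = dim_k R_n. Then for every n ≥ l one has t·a_{n−l} ≥ s·a_{n−1} − a_n. -/
open scoped ENNReal NNReal
open PowerSeries

theorem aux_fun {k M ι : Type} [Field k] [AddCommGroup M] [Module k M] [Module.Finite k M]
    [Fintype ι] : Module.finrank k (ι → M) = Fintype.card ι * Module.finrank k M := by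
  rw [Module.finrank_pi_fintype]
  simp

theorem aux_rank {k M E : Type} [Field k] [AddCommGroup M] [Module k M] [AddCommGroup E]
    [Module k E] [FiniteDimensional k M] (N : Submodule k M) (φ : M →ₗ[k] E) :
    Module.finrank k (LinearMap.range φ) ≤
      Module.finrank k (M ⧸ N) + Module.finrank k (N.map φ) := by
  obtain ⟨C, hC⟩ := N.exists_isCompl
  have h1 : LinearMap.range φ = C.map φ ⊔ N.map φ := by
    rw [← Submodule.map_sup, sup_comm, hC.sup_eq_top, Submodule.map_top]
  rw [h1, (Submodule.quotientEquivOfIsCompl N C hC).finrank_eq]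
  refine (Submodule.finrank_add_le_finrank_add_finrank _ _).trans ?_
  gcongr
  exact Submodule.finrank_map_le φ C

/-- Fox-type algebra homomorphism used to define the right derivative. -/
noncomputable def foxHom (k : Type) [Field k] {s : ℕ} (i : Fin s) :
    FreeAlgebra k (Fin s) →ₐ[k] Matrix (Fin 2) (Fin 2) (FreeAlgebra k (Fin s)) :=
  FreeAlgebra.lift k fun j => !![FreeAlgebra.ι k j, if j = i then 1 else 0; 0, 0]

theorem foxHom_tri {k : Type} [Field k] {s : ℕ} (i : Fin s) (f : FreeAlgebra k (Fin s)) :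
    foxHom k i f 0 0 = f ∧ foxHom k i f 1 0 = 0 := by
  induction f using FreeAlgebra.induction with
  | grade0 r => simp [Matrix.algebraMap_matrix_apply]
  | grade1 x => simp [foxHom]
  | mul a b ha hb => simp [Matrix.mul_apply, Fin.sum_univ_two, ha, hb]
  | add a b ha hb => simp [ha, hb]

/-- right derivative -/
noncomputable def rd (k : Type) [Field k] {s : ℕ} (i : Fin s) :
    FreeAlgebra k (Fin s) →ₗ[k] FreeAlgebra k (Fin s) where
  toFun f := foxHom k i f 0 1
  map_add' := by simp
  map_smul' := by simp

theorem rd_mul_ι {k : Type} [Field k] {s : ℕ} (i j : Fin s) (f : FreeAlgebra k (Fin s)) :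
    rd k i (f * FreeAlgebra.ι k j) = if j = i then f else 0 := by
  simp only [rd, LinearMap.coe_mk, AddHom.coe_mk, map_mul, Matrix.mul_apply, Fin.sum_univ_two,
    foxHom_tri]
  simp [foxHom]

/-- degree homomorphism -/
noncomputable def degHom (k : Type) [Field k] (s : ℕ) :
    FreeAlgebra k (Fin s) →ₐ[k] Polynomial (FreeAlgebra k (Fin s)) :=
  FreeAlgebra.lift k fun j => Polynomial.monomial 1 (FreeAlgebra.ι k j)

theorem degHom_of_mem {k : Type} [Field k] {s n : ℕ} {f : FreeAlgebra k (Fin s)}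
    (hf : f ∈ freeDeg k (Fin s) n) : degHom k s f = Polynomial.monomial n f := by
  unfold freeDeg at hf
  induction hf using Submodule.pow_induction_on_left' with
  | algebraMap r =>
    rw [AlgHom.commutes, Polynomial.monomial_zero_left]
    rfl
  | add x y i hx hy h1 h2 => simp [h1, h2]
  | mem_mul m hm i x hx h =>
    have hm' : degHom k s m = Polynomial.monomial 1 m := by
      induction hm using Submodule.span_induction with
      | mem x hx => obtain ⟨j, rfl⟩ := hx; simp [degHom]
      | zero => simp
      | add x y _ _ h1 h2 => simp [h1, h2]
      | smul a x _ h1 => rw [map_smul, h1, Polynomial.smul_monomial]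
    rw [map_mul, h, hm', Polynomial.monomial_mul_monomial, add_comm]

/-- homogeneous projection -/
noncomputable def hproj (k : Type) [Field k] (s n : ℕ) :
    FreeAlgebra k (Fin s) →ₗ[k] FreeAlgebra k (Fin s) where
  toFun f := (degHom k s f).coeff n
  map_add' := by simp
  map_smul' := by simp

theorem hproj_of_mem {k : Type} [Field k] {s m : ℕ} (n : ℕ) {f : FreeAlgebra k (Fin s)}
    (hf : f ∈ freeDeg k (Fin s) m) : hproj k s n f = if m = n then f else 0 := by
  simp [hproj, degHom_of_mem hf, Polynomial.coeff_monomial]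

theorem freeDeg_iSup (k : Type) [Field k] (s : ℕ) : ⨆ n, freeDeg k (Fin s) n = ⊤ := by
  rw [eq_top_iff]
  have key : ∀ f : FreeAlgebra k (Fin s), ∀ m, ∀ g ∈ freeDeg k (Fin s) m,
      f * g ∈ ⨆ n, freeDeg k (Fin s) n := by
    intro f
    induction f using FreeAlgebra.induction with
    | grade0 r =>
      intro m g hg
      rw [← Algebra.smul_def]
      exact Submodule.mem_iSup_of_mem m (Submodule.smul_mem _ _ hg)
    | grade1 x =>
      intro m g hg
      refine Submodule.mem_iSup_of_mem (m + 1) ?_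
      unfold freeDeg
      rw [pow_succ']
      exact Submodule.mul_mem_mul (Submodule.subset_span ⟨x, rfl⟩) hg
    | mul a b ha hb =>
      intro m g hg
      rw [mul_assoc]
      have := hb m g hg
      generalize b * g = y at this ⊢
      induction this using Submodule.iSup_induction' with
      | mem i x hx => exact ha i x hx
      | zero => simp
      | add x y _ _ h1 h2 => rw [mul_add]; exact add_mem h1 h2
    | add a b ha hb =>
      intro m g hg
      rw [add_mul]; exact add_mem (ha m g hg) (hb m g hg)
  intro f _
  have := key f 0 1 (by unfold freeDeg; rw [pow_zero]; exact Submodule.one_le.mp le_rfl)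
  simpa using this

theorem idealGen_mul {k : Type} [Field k] {A : Type} [Ring A] [Algebra k A] {S : Set A} {x : A}
    (hx : x ∈ idealGen k S) (y : A) : x * y ∈ idealGen k S := by
  unfold idealGen at *
  induction hx using Submodule.span_induction with
  | mem x hx =>
    obtain ⟨a, b, w, hw, rfl⟩ := hx
    exact Submodule.subset_span ⟨a, b * y, w, hw, by simp only [mul_assoc]⟩
  | zero => simp
  | add x z _ _ h1 h2 => rw [add_mul]; exact add_mem h1 h2
  | smul a x _ h1 => rw [smul_mul_assoc]; exact Submodule.smul_mem _ _ h1

/-- the derivative map to copies of the quotient -/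
noncomputable def phi {k : Type} [Field k] {s : ℕ} (I : Submodule k (FreeAlgebra k (Fin s))) :
    FreeAlgebra k (Fin s) →ₗ[k] (Fin s → FreeAlgebra k (Fin s) ⧸ I) :=
  LinearMap.pi fun i => I.mkQ ∘ₗ rd k i

theorem phi_mul_eq_zero {k : Type} [Field k] {s : ℕ} {α : Set (FreeAlgebra k (Fin s))}
    {x : FreeAlgebra k (Fin s)} (hx : x ∈ idealGen k α) {m : ℕ} {y : FreeAlgebra k (Fin s)}
    (hy : y ∈ freeDeg k (Fin s) (m + 1)) : phi (idealGen k α) (x * y) = 0 := by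
  unfold freeDeg at hy
  rw [pow_succ] at hy
  induction hy using Submodule.mul_induction_on' with
  | mem_mul_mem u hu v hv =>
    induction hv using Submodule.span_induction with
    | mem v hv =>
      obtain ⟨j, rfl⟩ := hv
      ext i
      rw [← mul_assoc]
      simp only [phi, LinearMap.pi_apply, LinearMap.comp_apply, rd_mul_ι, Pi.zero_apply]
      split_ifs
      · simpa using idealGen_mul hx u
      · simp
    | zero => simp
    | add v w _ _ h1 h2 => simp [mul_add, h1, h2]
    | smul a v _ h1 => simp [h1]
  | add u _ v _ h1 h2 => simp [mul_add, h1, h2]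

theorem freeDeg_finite (k : Type) [Field k] (s n : ℕ) :
    FiniteDimensional k (freeDeg k (Fin s) n) := by
  have h : (Submodule.span k (Set.range (FreeAlgebra.ι k (X := Fin s)))).FG :=
    Submodule.fg_span (Set.finite_range _)
  exact Module.Finite.iff_fg.mpr (h.pow n)

theorem phi_ideal {k : Type} [Field k] {s l n : ℕ} {α : Set (FreeAlgebra k (Fin s))}
    (hdeg : ∀ f ∈ α, f ∈ freeDeg k (Fin s) l)
    (U : Submodule k (Fin s → FreeAlgebra k (Fin s) ⧸ idealGen k α))
    (hU : ∀ w ∈ α, ∀ f ∈ freeDeg k (Fin s) (n - l), phi (idealGen k α) (f * w) ∈ U)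
    {x : FreeAlgebra k (Fin s)} (hx : x ∈ idealGen k α) :
    phi (idealGen k α) (hproj k s n x) ∈ U := by
  have main : ∀ w ∈ α, ∀ i, ∀ a ∈ freeDeg k (Fin s) i, ∀ j, ∀ b ∈ freeDeg k (Fin s) j,
      phi (idealGen k α) (hproj k s n (a * w * b)) ∈ U := by
    intro w hw i a ha j b hb
    have haw : a * w ∈ freeDeg k (Fin s) (i + l) := by
      have := Submodule.mul_mem_mul ha (hdeg w hw)
      unfold freeDeg at *
      rwa [← pow_add] at this
    have hawb : a * w * b ∈ freeDeg k (Fin s) (i + l + j) := by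
      have := Submodule.mul_mem_mul haw hb
      unfold freeDeg at *
      rwa [← pow_add] at this
    rw [hproj_of_mem n hawb]
    split_ifs with h
    · rcases j with _ | j
      · unfold freeDeg at hb
        rw [pow_zero] at hb
        obtain ⟨r, rfl⟩ := Submodule.mem_one.mp hb
        rw [← Algebra.commutes, ← Algebra.smul_def, map_smul]
        refine U.smul_mem _ (hU w hw a ?_)
        have : n - l = i := by omega
        rwa [this]
      · rw [phi_mul_eq_zero (Submodule.subset_span ⟨a, 1, w, hw, by simp⟩) hb]
        exact U.zero_mem
    · simp
  have hx' := hx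
  unfold idealGen at hx'
  clear hx
  induction hx' using Submodule.span_induction with
  | mem x hx =>
    obtain ⟨a, b, w, hw, rfl⟩ := hx
    have ha : a ∈ ⨆ n, freeDeg k (Fin s) n := by rw [freeDeg_iSup]; trivial
    have hb : b ∈ ⨆ n, freeDeg k (Fin s) n := by rw [freeDeg_iSup]; trivial
    induction ha using Submodule.iSup_induction' with
    | mem i a ha =>
      induction hb using Submodule.iSup_induction' with
      | mem j b hb => exact main w hw i a ha j b hb
      | zero => simp
      | add x y _ _ h1 h2 => rw [mul_add, map_add, map_add]; exact add_mem h1 h2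
    | zero => simp
    | add x y _ _ h1 h2 => rw [add_mul, add_mul, map_add, map_add]; exact add_mem h1 h2
  | zero => simp
  | add x y _ _ h1 h2 => rw [map_add, map_add]; exact add_mem h1 h2
  | smul c x _ h => rw [map_smul, map_smul]; exact U.smul_mem _ h

theorem phi_range {k : Type} [Field k] {s n : ℕ} (hn : 1 ≤ n)
    (I : Submodule k (FreeAlgebra k (Fin s))) :
    s * quotDim k (freeDeg k (Fin s)) I (n - 1) ≤
      Module.finrank k (LinearMap.range ((phi I).domRestrict (freeDeg k (Fin s) n))) := by
  have := freeDeg_finite k s n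
  have := freeDeg_finite k s (n - 1)
  set F := freeDeg k (Fin s) (n - 1) with hF
  let e : (F ⧸ I.comap F.subtype) →ₗ[k] (FreeAlgebra k (Fin s) ⧸ I) :=
    Submodule.mapQ _ _ F.subtype le_rfl
  have he : Function.Injective e := by
    rw [← LinearMap.ker_eq_bot]
    exact Submodule.ker_liftQ_eq_bot' _ _ (by simp [LinearMap.ker_comp])
  let E : (Fin s → (F ⧸ I.comap F.subtype)) →ₗ[k] (Fin s → FreeAlgebra k (Fin s) ⧸ I) :=
    LinearMap.pi fun i => e ∘ₗ LinearMap.proj i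
  have hE : Function.Injective E := by
    intro x y h
    ext i
    exact he (congrFun h i)
  have hle : LinearMap.range E ≤
      LinearMap.range ((phi I).domRestrict (freeDeg k (Fin s) n)) := by
    rintro _ ⟨c, rfl⟩
    choose f hf using fun i => Submodule.mkQ_surjective _ (c i)
    have hm : ∑ j, (f j : FreeAlgebra k (Fin s)) * FreeAlgebra.ι k j ∈ freeDeg k (Fin s) n := by
      refine Submodule.sum_mem _ fun j _ => ?_
      obtain ⟨m, rfl⟩ : ∃ m, n = m + 1 := ⟨n - 1, by omega⟩
      have h2 : (f j : FreeAlgebra k (Fin s)) ∈ freeDeg k (Fin s) m := (f j).2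
      have := Submodule.mul_mem_mul h2 (Submodule.subset_span (R := k) (Set.mem_range_self j) :
        FreeAlgebra.ι k j ∈ Submodule.span k (Set.range (FreeAlgebra.ι k)))
      unfold freeDeg at this ⊢
      rwa [← pow_succ] at this
    refine ⟨⟨_, hm⟩, ?_⟩
    ext i
    simp only [LinearMap.domRestrict_apply, phi, LinearMap.pi_apply, LinearMap.comp_apply,
      map_sum, rd_mul_ι]
    simp only [E, LinearMap.pi_apply, LinearMap.comp_apply, LinearMap.proj_apply, ← hf]
    rw [Finset.sum_eq_single i (by intro b _ hb; simp [hb]) (by simp)]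
    simp [e]
  have h1 := LinearMap.finrank_range_of_inj hE
  rw [aux_fun, Fintype.card_fin] at h1
  unfold quotDim
  rw [← h1]
  exact Submodule.finrank_mono hle

/-- **Govorov's second inequality** (part of Theorem 3.1). If `I ⊴ F_s` is minimally
generated by `t` homogeneous elements of degree `l` and `R = F_s/I` with `a n = dim R_n`,
then `t·a_{n-l} ≥ s·a_{n-1} - a_n` for every `n ≥ l`. -/
theorem stmt2 {k : Type} [Field k] (s l t : ℕ) (hs : 1 ≤ s) (hl : 2 ≤ l) (ht : 1 ≤ t)
    (α : Set (FreeAlgebra k (Fin s))) (hαfin : α.Finite) (hcard : α.ncard = t)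
    (hdeg : ∀ f ∈ α, f ∈ freeDeg k (Fin s) l)
    (I : Submodule k (FreeAlgebra k (Fin s)))
    (hgen : idealGen k α = I)
    (hmin : ∀ β ⊆ α, idealGen k β = I → β = α)
    (a : ℕ → ℕ) (ha : ∀ n, a n = quotDim k (freeDeg k (Fin s)) I n) :
    ∀ n : ℕ, l ≤ n → (s : ℤ) * a (n - 1) - a n ≤ (t : ℤ) * a (n - l) := by
  intro n hn
  subst hgen
  clear hmin
  have := freeDeg_finite k s n
  have := freeDeg_finite k s (n - l)
  have : Fintype α := hαfin.fintype
  classical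
  obtain ⟨m, rfl⟩ : ∃ m, l = m + 1 := ⟨l - 1, by omega⟩
  set I := idealGen k α with hI
  set G := freeDeg k (Fin s) (n - (m + 1)) with hG
  let g : α → (G ⧸ I.comap G.subtype) →ₗ[k] (Fin s → FreeAlgebra k (Fin s) ⧸ I) := fun w =>
    Submodule.liftQ _ (phi I ∘ₗ LinearMap.mulRight k (w : FreeAlgebra k (Fin s)) ∘ₗ G.subtype)
      (by
        intro x hx
        exact phi_mul_eq_zero (α := α) hx (hdeg w w.2))
  let L : (α → (G ⧸ I.comap G.subtype)) →ₗ[k] (Fin s → FreeAlgebra k (Fin s) ⧸ I) :=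
    ∑ w : α, g w ∘ₗ LinearMap.proj w
  have hU : ∀ w ∈ α, ∀ f ∈ G, phi I (f * w) ∈ LinearMap.range L := by
    intro w hw f hf
    refine ⟨Pi.single ⟨w, hw⟩ (Submodule.Quotient.mk ⟨f, hf⟩), ?_⟩
    simp only [L, LinearMap.sum_apply, LinearMap.comp_apply, LinearMap.proj_apply]
    rw [Finset.sum_eq_single ⟨w, hw⟩ (by intro b _ hb; simp [hb]) (by simp)]
    rw [Pi.single_eq_same]
    rfl
  have h1 := phi_range (k := k) (s := s) (n := n) (by omega) I
  have h2 := aux_rank (I.comap (freeDeg k (Fin s) n).subtype)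
    ((phi I).domRestrict (freeDeg k (Fin s) n))
  have h3 : (I.comap (freeDeg k (Fin s) n).subtype).map
      ((phi I).domRestrict (freeDeg k (Fin s) n)) ≤ LinearMap.range L := by
    rintro _ ⟨x, hx, rfl⟩
    have := phi_ideal (n := n) hdeg _ hU hx
    rw [Submodule.subtype_apply, hproj_of_mem n x.2, if_pos rfl] at this
    exact this
  have h4 := Submodule.finrank_mono h3
  have h5 := LinearMap.finrank_range_le L
  rw [aux_fun] at h5
  rw [← Nat.card_eq_fintype_card, Nat.card_coe_set_eq, hcard] at h5
  have h6 : s * a (n - 1) ≤ a n + t * a (n - (m + 1)) := by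
    rw [ha, ha, ha]
    exact h1.trans (h2.trans (Nat.add_le_add_left (h4.trans h5) _))
  have : (s : ℤ) * a (n - 1) ≤ a n + t * a (n - (m + 1)) := by exact_mod_cast h6
  linarith
end

section
/- Let A be a nonzero graded algebra that is extremal. Then 0 < r(A) < ∞. -/
open scoped ENNReal NNReal
open PowerSeries

noncomputable section

/-- A `k`-submodule which is a two-sided ideal. -/
def IsTwoSidedSub {k A : Type} [Field k] [Ring A] [Algebra k A] (I : Submodule k A) : Prop :=
  ∀ a : A, ∀ x ∈ I, a * x ∈ I ∧ x * a ∈ I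

/-- A submodule is homogeneous (w.r.t. the grading `𝒜`) if it is closed under taking
homogeneous components. -/
def IsHomogSub {k A : Type} [Field k] [Ring A] [Algebra k A]
    (𝒜 : ℕ → Submodule k A) [GradedAlgebra 𝒜] (I : Submodule k A) : Prop :=
  ∀ x ∈ I, ∀ n, (DirectSum.decompose 𝒜 x n : A) ∈ I

/-- A graded algebra is extremal if every quotient by a nonzero homogeneous two-sided
ideal has strictly larger radius of convergence of its Hilbert series. -/
def Extremal {k A : Type} [Field k] [Ring A] [Algebra k A]
    (𝒜 : ℕ → Submodule k A) [GradedAlgebra 𝒜] : Prop :=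
  ∀ I : Submodule k A, IsTwoSidedSub I → IsHomogSub 𝒜 I → I ≠ ⊥ →
    hradius (fun n => (Module.finrank k (𝒜 n) : ℝ)) <
      hradius (fun n => (quotDim k 𝒜 I n : ℝ))

end

/-- Pairs `(i, j)` with `i + j + d = n`, both entries below `n`. -/
def pairsF (d n : ℕ) : Finset (ℕ × ℕ) :=
  (Finset.range n ×ˢ Finset.range n).filter (fun p => p.1 + p.2 + d = n)

lemma partial_bound (a : ℕ → ℝ) (ha : ∀ n, 0 ≤ a n) (d : ℕ) (hd : 1 ≤ d) (t : ℝ) (ht0 : 0 ≤ t)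
    (ht1 : t ≤ 1) (N : ℕ) :
    ∑ n ∈ Finset.range (N + 1), (∑ p ∈ pairsF d n, a p.1 * a p.2) * t ^ n ≤
      t * (∑ n ∈ Finset.range N, a n * t ^ n) ^ 2 := by
  have h1 : ∀ n ∈ Finset.range (N + 1), (∑ p ∈ pairsF d n, a p.1 * a p.2) * t ^ n ≤
      ∑ p ∈ Finset.range N ×ˢ Finset.range N,
        if p.1 + p.2 + d = n then t * ((a p.1 * t ^ p.1) * (a p.2 * t ^ p.2)) else 0 := by
    intro n hn
    rw [← Finset.sum_filter, Finset.sum_mul]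
    have hsub : pairsF d n ⊆
        (Finset.range N ×ˢ Finset.range N).filter (fun p => p.1 + p.2 + d = n) := by
      intro p hp
      simp only [pairsF, Finset.mem_filter, Finset.mem_product, Finset.mem_range] at hp hn ⊢
      omega
    refine le_trans (Finset.sum_le_sum ?_) (Finset.sum_le_sum_of_subset_of_nonneg hsub ?_)
    · intro p hp
      have hp2 : p.1 + p.2 + d = n := (Finset.mem_filter.1 hp).2
      have h2 : t ^ n ≤ t * t ^ p.1 * t ^ p.2 := by
        calc t ^ n ≤ t ^ (1 + p.1 + p.2) := pow_le_pow_of_le_one ht0 ht1 (by omega)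
          _ = t * t ^ p.1 * t ^ p.2 := by rw [pow_add, pow_add, pow_one]
      calc a p.1 * a p.2 * t ^ n ≤ a p.1 * a p.2 * (t * t ^ p.1 * t ^ p.2) :=
            mul_le_mul_of_nonneg_left h2 (mul_nonneg (ha _) (ha _))
        _ = _ := by ring
    · intro p _ _
      have := ha p.1
      have := ha p.2
      positivity
  have h2 := Finset.sum_le_sum h1
  refine le_trans h2 ?_
  rw [sq, Finset.sum_mul_sum, ← Finset.sum_product (f := fun p : ℕ × ℕ =>
    (a p.1 * t ^ p.1) * (a p.2 * t ^ p.2)), Finset.mul_sum, Finset.sum_comm]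
  refine Finset.sum_le_sum ?_
  intro p _
  have h1 := ha p.1
  have h2 := ha p.2
  rw [Finset.sum_ite_eq]
  split_ifs
  · exact le_rfl
  · positivity

lemma summable_of_rec (a q : ℕ → ℝ) (ha : ∀ n, 0 ≤ a n) (hq : ∀ n, 0 ≤ q n) (d : ℕ) (hd : 1 ≤ d)
    (hrec : ∀ n, a n ≤ q n + ∑ p ∈ pairsF d n, a p.1 * a p.2) (s : ℝ) (hs : 0 < s)
    (hsum : Summable fun n => q n * s ^ n) :
    ∃ t : ℝ, 0 < t ∧ Summable fun n => a n * t ^ n := by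
  set Q := ∑' n, q n * s ^ n with hQ
  have hQ0 : 0 ≤ Q := tsum_nonneg fun n => mul_nonneg (hq n) (by positivity)
  have hpos : 0 < 1 / (Q + 1) ^ 2 := by positivity
  refine ⟨min s (1 / (Q + 1) ^ 2), lt_min hs hpos, ?_⟩
  set t := min s (1 / (Q + 1) ^ 2) with htdef
  have ht0 : 0 < t := lt_min hs hpos
  have hts : t ≤ s := min_le_left _ _
  have ht2 : t * (Q + 1) ^ 2 ≤ 1 := by
    have : t ≤ 1 / (Q + 1) ^ 2 := min_le_right _ _
    rwa [le_div_iff₀ (by positivity)] at this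
  have ht1 : t ≤ 1 := by
    have h1 : (1 : ℝ) ≤ (Q + 1) ^ 2 := by nlinarith
    nlinarith
  have hb : ∀ N, ∑ n ∈ Finset.range N, a n * t ^ n ≤ Q + 1 := by
    intro N
    induction N with
    | zero => simp; linarith
    | succ N ih =>
      have h0 : 0 ≤ ∑ n ∈ Finset.range N, a n * t ^ n :=
        Finset.sum_nonneg fun n _ => mul_nonneg (ha n) (by positivity)
      have hA : ∑ n ∈ Finset.range (N + 1), a n * t ^ n ≤
          ∑ n ∈ Finset.range (N + 1), q n * s ^ n +
          ∑ n ∈ Finset.range (N + 1), (∑ p ∈ pairsF d n, a p.1 * a p.2) * t ^ n := by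
        rw [← Finset.sum_add_distrib]
        refine Finset.sum_le_sum fun n _ => ?_
        have e1 : a n * t ^ n ≤ (q n + ∑ p ∈ pairsF d n, a p.1 * a p.2) * t ^ n :=
          mul_le_mul_of_nonneg_right (hrec n) (by positivity)
        have e2 : q n * t ^ n ≤ q n * s ^ n :=
          mul_le_mul_of_nonneg_left (pow_le_pow_left₀ ht0.le hts n) (hq n)
        linarith
      have hB := partial_bound a ha d hd t ht0.le ht1 N
      have hC : ∑ n ∈ Finset.range (N + 1), q n * s ^ n ≤ Q :=
        hsum.sum_le_tsum _ fun n _ => mul_nonneg (hq n) (by positivity)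
      have hD : t * (∑ n ∈ Finset.range N, a n * t ^ n) ^ 2 ≤ t * (Q + 1) ^ 2 :=
        mul_le_mul_of_nonneg_left (pow_le_pow_left₀ h0 ih 2) ht0.le
      linarith
  exact summable_of_sum_range_le (fun n => mul_nonneg (ha n) (by positivity)) hb

lemma hradius_pos_of (a : ℕ → ℝ) (ha : ∀ n, 0 ≤ a n) (t : ℝ) (ht : 0 < t)
    (h : Summable fun n => a n * t ^ n) : 0 < hradius a := by
  unfold hradius
  lift t to ℝ≥0 using ht.le
  have h1 : (0 : ℝ≥0∞) < (t : ℝ≥0∞) := by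
    rw [ENNReal.coe_pos]; exact_mod_cast ht
  refine lt_of_lt_of_le h1 (le_iSup₂_of_le t ?_ le_rfl)
  convert h using 2 with n
  rw [abs_of_nonneg (ha n)]

lemma of_hradius_pos (a : ℕ → ℝ) (ha : ∀ n, 0 ≤ a n) (h : 0 < hradius a) :
    ∃ t : ℝ, 0 < t ∧ Summable fun n => a n * t ^ n := by
  unfold hradius at h
  simp only [lt_iSup_iff] at h
  obtain ⟨r, hr, hr0⟩ := h
  refine ⟨r, by exact_mod_cast hr0, ?_⟩
  convert hr using 2 with n
  rw [abs_of_nonneg (ha n)]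

section alg
variable {k A : Type} [Field k] [Ring A] [Algebra k A]

/-- The degree `n` piece of the ideal generated by `x` of degree `d`. -/
def pieceJ (𝒜 : ℕ → Submodule k A) (x : A) (d n : ℕ) : Submodule k A :=
  ∑ p ∈ pairsF d n, 𝒜 p.1 * (𝒜 p.2).map (LinearMap.mulLeft k x)

lemma finrank_mul_le_aux (M N : Submodule k A) [FiniteDimensional k M] [FiniteDimensional k N] :
    FiniteDimensional k ↥(M * N) ∧
    Module.finrank k ↥(M * N) ≤ Module.finrank k M * Module.finrank k N := by
  rw [← Submodule.mulMap_range]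
  refine ⟨inferInstance, ?_⟩
  rw [← Module.finrank_tensorProduct]
  exact LinearMap.finrank_range_le _

lemma finrank_sum_le_aux {ι : Type} (s : Finset ι) (f : ι → Submodule k A) (c : ι → ℕ)
    (h : ∀ i, FiniteDimensional k (f i) ∧ Module.finrank k (f i) ≤ c i) :
    FiniteDimensional k ↥(∑ i ∈ s, f i) ∧ Module.finrank k ↥(∑ i ∈ s, f i) ≤ ∑ i ∈ s, c i := by
  classical
  induction s using Finset.induction_on with
  | empty => 
    rw [Finset.sum_empty, Finset.sum_empty, Submodule.zero_eq_bot]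
    exact ⟨inferInstance, by simp⟩
  | insert i s hi ih =>
    rw [Finset.sum_insert hi, Finset.sum_insert hi]
    have := ih.1
    have := (h i).1
    rw [Submodule.add_eq_sup]
    exact ⟨inferInstance, (Submodule.finrank_add_le_finrank_add_finrank _ _).trans
      (add_le_add (h i).2 ih.2)⟩

lemma finrank_pieceJ (𝒜 : ℕ → Submodule k A) [hfd : ∀ n, FiniteDimensional k (𝒜 n)]
    (x : A) (d n : ℕ) :
    FiniteDimensional k ↥(pieceJ 𝒜 x d n) ∧ Module.finrank k ↥(pieceJ 𝒜 x d n) ≤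
      ∑ p ∈ pairsF d n, Module.finrank k (𝒜 p.1) * Module.finrank k (𝒜 p.2) := by
  refine finrank_sum_le_aux _ _ _ fun p => ?_
  have h := finrank_mul_le_aux (𝒜 p.1) ((𝒜 p.2).map (LinearMap.mulLeft k x))
  exact ⟨h.1, h.2.trans (Nat.mul_le_mul_left _ (Submodule.finrank_map_le _ _))⟩

lemma mem_idealGen_singleton (x a b : A) : a * x * b ∈ idealGen k ({x} : Set A) :=
  Submodule.subset_span ⟨a, b, x, rfl, rfl⟩

lemma pieceJ_le (𝒜 : ℕ → Submodule k A) (x : A) (d n : ℕ) :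
    pieceJ 𝒜 x d n ≤ idealGen k ({x} : Set A) := by
  unfold pieceJ
  refine Finset.sum_induction _ (fun S => S ≤ idealGen k ({x} : Set A)) ?_ ?_ ?_
  · intro S T hS hT
    exact sup_le hS hT
  · exact bot_le
  · intro p _
    rw [Submodule.mul_le]
    rintro a _ y ⟨b, _, rfl⟩
    rw [LinearMap.mulLeft_apply, ← mul_assoc]
    exact mem_idealGen_singleton x a b

lemma pieceJ_ge (𝒜 : ℕ → Submodule k A) (x : A) (d n : ℕ) (p : ℕ × ℕ) (hp : p ∈ pairsF d n) :
    𝒜 p.1 * (𝒜 p.2).map (LinearMap.mulLeft k x) ≤ pieceJ 𝒜 x d n := by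
  unfold pieceJ
  rw [← Finset.add_sum_erase _ _ hp]
  exact le_sup_left

lemma idealGen_twoSided (x : A) : IsTwoSidedSub (idealGen k ({x} : Set A)) := by
  intro c y hy
  unfold idealGen at hy
  induction hy using Submodule.span_induction with
  | mem y hy =>
    obtain ⟨a, b, s, hs, rfl⟩ := hy
    obtain rfl : s = x := hs
    refine ⟨?_, ?_⟩
    · have := mem_idealGen_singleton (k := k) s (c * a) b
      simpa only [mul_assoc] using this
    · have := mem_idealGen_singleton (k := k) s a (b * c)
      simpa only [mul_assoc] using this
  | zero => simp
  | add y z _ _ hy hz =>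
    rw [mul_add, add_mul]
    exact ⟨add_mem hy.1 hz.1, add_mem hy.2 hz.2⟩
  | smul r y _ hy =>
    rw [mul_smul_comm, smul_mul_assoc]
    exact ⟨Submodule.smul_mem _ _ hy.1, Submodule.smul_mem _ _ hy.2⟩

lemma decompose_mem_pieceJ (𝒜 : ℕ → Submodule k A) [GradedAlgebra 𝒜] (x : A) (d : ℕ)
    (hd : 1 ≤ d) (hx : x ∈ 𝒜 d) (n : ℕ) (y : A) (hy : y ∈ idealGen k ({x} : Set A)) :
    (DirectSum.decompose 𝒜 y n : A) ∈ pieceJ 𝒜 x d n := by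
  unfold idealGen at hy
  induction hy using Submodule.span_induction with
  | mem y hy =>
    obtain ⟨a, b, s, hs, rfl⟩ := hy
    obtain rfl : s = x := hs
    induction a using DirectSum.Decomposition.inductionOn 𝒜 with
    | zero => simp
    | add a a' h h' =>
      rw [add_mul, add_mul, DirectSum.decompose_add]
      exact add_mem h h'
    | @homogeneous i a =>
      induction b using DirectSum.Decomposition.inductionOn 𝒜 with
      | zero => simp
      | add b b' h h' =>
        rw [mul_add, DirectSum.decompose_add]
        exact add_mem h h'
      | @homogeneous j b =>
        have hm : (a : A) * s * b ∈ 𝒜 (i + d + j) :=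
          SetLike.mul_mem_graded (SetLike.mul_mem_graded a.2 hx) b.2
        by_cases h : i + d + j = n
        · subst h
          rw [DirectSum.decompose_of_mem_same 𝒜 hm]
          have hle : 𝒜 i * (𝒜 j).map (LinearMap.mulLeft k s) ≤ pieceJ 𝒜 s d (i + d + j) :=
            pieceJ_ge 𝒜 s d (i + d + j) (i, j) (by
              simp only [pairsF, Finset.mem_filter, Finset.mem_product, Finset.mem_range]
              omega)
          apply hle
          rw [mul_assoc]
          exact Submodule.mul_mem_mul a.2 ⟨b, b.2, rfl⟩
        · rw [DirectSum.decompose_of_mem_ne 𝒜 hm h]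
          exact zero_mem _
  | zero => simp
  | add y z _ _ hy hz =>
    rw [DirectSum.decompose_add]
    exact add_mem hy hz
  | smul r y _ hy =>
    rw [DirectSum.decompose_smul]
    exact Submodule.smul_mem _ r hy

lemma finrank_le_rec (𝒜 : ℕ → Submodule k A) [GradedAlgebra 𝒜]
    [hfd : ∀ n, FiniteDimensional k (𝒜 n)] (x : A) (d : ℕ)
    (hd : 1 ≤ d) (hx : x ∈ 𝒜 d) (n : ℕ) :
    Module.finrank k (𝒜 n) ≤ quotDim k 𝒜 (idealGen k ({x} : Set A)) n +
      ∑ p ∈ pairsF d n, Module.finrank k (𝒜 p.1) * Module.finrank k (𝒜 p.2) := by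
  obtain ⟨h1, h2⟩ := finrank_pieceJ 𝒜 x d n
  set S := (idealGen k ({x} : Set A)).comap (𝒜 n).subtype with hS
  have h3 := Submodule.finrank_quotient_add_finrank S
  have h4 : Module.finrank k S ≤ Module.finrank k (pieceJ 𝒜 x d n) := by
    rw [LinearEquiv.finrank_eq (Submodule.equivMapOfInjective (𝒜 n).subtype
      (𝒜 n).injective_subtype S)]
    apply Submodule.finrank_mono
    rintro _ ⟨y, hy, rfl⟩
    have := decompose_mem_pieceJ 𝒜 x d hd hx n y hy
    rwa [DirectSum.decompose_of_mem_same 𝒜 y.2] at this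
  unfold quotDim
  rw [← hS]
  omega

end alg

/-- **Proposition 5.3**: if `A` is a nonzero extremal graded algebra then
`0 < r(A) < ∞`. -/
theorem stmt8 {k A : Type} [Field k] [Ring A] [Algebra k A] [Nontrivial A]
    (𝒜 : ℕ → Submodule k A) [GradedAlgebra 𝒜]
    [hfd : ∀ n, FiniteDimensional k (𝒜 n)]
    (hext : Extremal 𝒜) :
    0 < hradius (fun n => (Module.finrank k (𝒜 n) : ℝ)) ∧
    hradius (fun n => (Module.finrank k (𝒜 n) : ℝ)) < ⊤ := by
  refine ⟨?_, ?_⟩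
  · by_cases hx : ∃ d, 1 ≤ d ∧ ∃ x ∈ 𝒜 d, x ≠ 0
    · obtain ⟨d, hd, x, hx, hx0⟩ := hx
      have h1 := hext (idealGen k ({x} : Set A)) (idealGen_twoSided x)
        (fun y hy n => pieceJ_le 𝒜 x d n (decompose_mem_pieceJ 𝒜 x d hd hx n y hy)) (by
          intro h
          have h2 := mem_idealGen_singleton (k := k) x 1 1
          rw [h, Submodule.mem_bot, one_mul, mul_one] at h2
          exact hx0 h2)
      obtain ⟨s, hs, hsum⟩ := of_hradius_pos _ (fun n => Nat.cast_nonneg _)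
        (lt_of_le_of_lt bot_le h1)
      obtain ⟨t, ht, hsum'⟩ := summable_of_rec (fun n => (Module.finrank k (𝒜 n) : ℝ)) _
        (fun n => Nat.cast_nonneg _) (fun n => Nat.cast_nonneg _) d hd
        (fun n => by exact_mod_cast finrank_le_rec 𝒜 x d hd hx n) s hs hsum
      exact hradius_pos_of _ (fun n => Nat.cast_nonneg _) t ht hsum'
    · push Not at hx
      refine hradius_pos_of _ (fun n => Nat.cast_nonneg _) 1 one_pos ?_
      refine summable_of_ne_finset_zero (s := {0}) fun n hn => ?_
      have hn1 : 1 ≤ n := by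
        rw [Finset.mem_singleton] at hn
        omega
      have hb : 𝒜 n = ⊥ := by
        rw [Submodule.eq_bot_iff]
        exact fun x hxn => hx n hn1 x hxn
      rw [hb]
      simp
  · refine lt_of_lt_of_le (hext ⊤ (fun _ _ _ => ⟨trivial, trivial⟩) (fun _ _ _ => trivial)
      top_ne_bot) le_top
end

section
/- Let A be a graded algebra that is extremal. Then A is a prime ring: for all a, b ∈ A, if a·x·b = 0 for every x ∈ A, then a = 0 or b = 0. -/
open scoped ENNReal NNReal
open PowerSeries

section Helpers

variable {k A : Type} [Field k] [Ring A] [Algebra k A]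

theorem aux_le_hradius (a : ℕ → ℝ) (r : ℝ≥0) (h : Summable fun n => |a n| * (r : ℝ) ^ n) :
    (r : ℝ≥0∞) ≤ hradius a := by
  unfold hradius
  exact le_iSup₂_of_le r h le_rfl

theorem aux_exists_of_lt (a : ℕ → ℝ) (x : ℝ≥0∞) (h : x < hradius a) :
    ∃ r : ℝ≥0, x < r ∧ Summable fun n => |a n| * (r : ℝ) ^ n := by
  unfold hradius at h
  obtain ⟨r, hr⟩ := lt_iSup_iff.mp h
  obtain ⟨hs, hr⟩ := lt_iSup_iff.mp hr
  exact ⟨r, hr, hs⟩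

theorem aux_summable_mono (a : ℕ → ℝ) (r s : ℝ≥0) (hrs : r ≤ s)
    (h : Summable fun n => |a n| * (s : ℝ) ^ n) : Summable fun n => |a n| * (r : ℝ) ^ n := by
  refine Summable.of_nonneg_of_le (fun n => by positivity) (fun n => ?_) h
  gcongr

/-- Lifts of a basis of the quotient. -/
theorem aux_lifts (V I : Submodule k A) [FiniteDimensional k V] :
    ∃ u : Fin (Module.finrank k (↥V ⧸ (I.comap V.subtype))) → A,
      (∀ s, u s ∈ V) ∧ ∀ x ∈ V, ∃ y ∈ Submodule.span k (Set.range u), x - y ∈ I := by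
  set Q := ↥V ⧸ (I.comap V.subtype)
  let b := Module.finBasis k Q
  have hsurj := Submodule.mkQ_surjective (I.comap V.subtype)
  choose v hv using fun s => hsurj (b s)
  refine ⟨fun s => (v s : A), fun s => (v s).2, fun x hx => ?_⟩
  let y : V := ∑ s, b.repr ((I.comap V.subtype).mkQ ⟨x, hx⟩) s • v s
  refine ⟨(y : A), ?_, ?_⟩
  · simp only [y, Submodule.coe_sum, Submodule.coe_smul]
    exact Submodule.sum_mem _ fun s _ => Submodule.smul_mem _ _
      (Submodule.subset_span ⟨s, rfl⟩)
  · have h : (I.comap V.subtype).mkQ (⟨x, hx⟩ - y) = 0 := by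
      rw [map_sub, sub_eq_zero]
      simp only [y, map_sum, map_smul, hv]
      exact (b.sum_repr _).symm
    rw [Submodule.mkQ_apply, Submodule.Quotient.mk_eq_zero] at h
    exact h

variable (𝒜 : ℕ → Submodule k A) [GradedAlgebra 𝒜]

theorem aux_dec_add (x y : A) (n : ℕ) : (DirectSum.decompose 𝒜 (x + y) n : A) =
    DirectSum.decompose 𝒜 x n + DirectSum.decompose 𝒜 y n := by
  rw [DirectSum.decompose_add]; rfl

theorem aux_dec_smul (r : k) (x : A) (n : ℕ) : (DirectSum.decompose 𝒜 (r • x) n : A) =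
    r • (DirectSum.decompose 𝒜 x n : A) := by
  rw [DirectSum.decompose_smul]; rfl

theorem aux_dec_zero (n : ℕ) : (DirectSum.decompose 𝒜 (0 : A) n : A) = 0 := by
  rw [DirectSum.decompose_zero]; rfl

/-- If the homogeneous components of all `x c y`, `x, y` homogeneous, lie in the
corresponding `W n`, then so do those of the elements of the ideal of `c`. -/
theorem aux_comp_mem (c : A) (p : ℕ) (hc : c ∈ 𝒜 p) (W : ℕ → Submodule k A)
    (hW : ∀ i j, ∀ x ∈ 𝒜 i, ∀ y ∈ 𝒜 j, x * c * y ∈ W (i + p + j))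
    (z : A) (hz : z ∈ idealGen k {c}) (n : ℕ) : (DirectSum.decompose 𝒜 z n : A) ∈ W n := by
  unfold idealGen at hz
  induction hz using Submodule.span_induction with
  | mem z hz =>
    obtain ⟨x, y, s, hs, rfl⟩ := hz
    rw [Set.mem_singleton_iff] at hs
    subst hs
    induction x using DirectSum.Decomposition.inductionOn 𝒜 with
    | zero => rw [zero_mul, zero_mul, aux_dec_zero]; exact zero_mem _
    | add x x' h h' =>
      rw [add_mul, add_mul, aux_dec_add]; exact add_mem h h'
    | @homogeneous i x =>
      induction y using DirectSum.Decomposition.inductionOn 𝒜 with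
      | zero => rw [mul_zero, aux_dec_zero]; exact zero_mem _
      | add x x' h h' =>
        rw [mul_add, aux_dec_add]; exact add_mem h h'
      | @homogeneous j y =>
        have hm : (x : A) * s * y ∈ 𝒜 (i + p + j) :=
          SetLike.mul_mem_graded (SetLike.mul_mem_graded x.2 hc) y.2
        by_cases hn : i + p + j = n
        · subst hn
          rw [DirectSum.decompose_of_mem_same 𝒜 hm]
          exact hW i j x x.2 y y.2
        · rw [DirectSum.decompose_of_mem_ne 𝒜 hm hn]; exact zero_mem _
  | zero => rw [aux_dec_zero]; exact zero_mem _
  | add x y _ _ h h' => rw [aux_dec_add]; exact add_mem h h'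
  | smul r x _ h => rw [aux_dec_smul]; exact Submodule.smul_mem _ _ h

theorem aux_gen_mem (c x y : A) : x * c * y ∈ idealGen k {c} :=
  Submodule.subset_span ⟨x, y, c, rfl, rfl⟩

theorem aux_gen_twoSided (c : A) : IsTwoSidedSub (idealGen k {c}) := by
  intro a z hz
  unfold idealGen at hz
  induction hz using Submodule.span_induction with
  | mem z hz =>
    obtain ⟨x, y, s, hs, rfl⟩ := hz
    rw [Set.mem_singleton_iff] at hs
    subst hs
    constructor
    · have := aux_gen_mem (k := k) s (a * x) y
      simpa only [mul_assoc] using this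
    · have := aux_gen_mem (k := k) s x (y * a)
      simpa only [mul_assoc] using this
  | zero => simp
  | add x y _ _ h h' =>
    rw [mul_add, add_mul]; exact ⟨add_mem h.1 h'.1, add_mem h.2 h'.2⟩
  | smul r x _ h =>
    rw [mul_smul_comm, smul_mul_assoc]
    exact ⟨Submodule.smul_mem _ _ h.1, Submodule.smul_mem _ _ h.2⟩

theorem aux_gen_homog (c : A) (p : ℕ) (hc : c ∈ 𝒜 p) : IsHomogSub 𝒜 (idealGen k {c}) :=
  fun z hz n => aux_comp_mem 𝒜 c p hc (fun _ => idealGen k {c})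
    (fun _ _ x _ y _ => aux_gen_mem c x y) z hz n

theorem aux_annih (c : A) (hcc : ∀ x, c * x * c = 0) (z : A) (hz : z ∈ idealGen k {c}) (w : A) :
    z * w * c = 0 ∧ c * w * z = 0 := by
  unfold idealGen at hz
  induction hz using Submodule.span_induction with
  | mem z hz =>
    obtain ⟨x, y, s, hs, rfl⟩ := hz
    rw [Set.mem_singleton_iff] at hs
    subst hs
    constructor
    · have h : x * s * y * w * s = x * (s * (y * w) * s) := by noncomm_ring
      rw [h, hcc, mul_zero]
    · have h : s * w * (x * s * y) = (s * (w * x) * s) * y := by noncomm_ring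
      rw [h, hcc, zero_mul]
  | zero => simp
  | add x y _ _ h h' =>
    simp only [add_mul, mul_add, h.1, h.2, h'.1, h'.2, add_zero, and_self]
  | smul r x _ h =>
    simp only [smul_mul_assoc, mul_smul_comm, h.1, h.2, smul_zero, and_self]

theorem aux_finrank_le [hfd : ∀ n, FiniteDimensional k (𝒜 n)] (c : A) (p : ℕ) (hc : c ∈ 𝒜 p)
    (hcc : ∀ x, c * x * c = 0) (n : ℕ) :
    Module.finrank k (𝒜 n) ≤ quotDim k 𝒜 (idealGen k {c}) n +
      if p ≤ n then ∑ ij ∈ Finset.HasAntidiagonal.antidiagonal (n - p),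
        quotDim k 𝒜 (idealGen k {c}) ij.1 * quotDim k 𝒜 (idealGen k {c}) ij.2 else 0 := by
  set I := idealGen k {c} with hI
  choose u hu hspan using fun i => aux_lifts (𝒜 i) I
  let W : ℕ → Submodule k A := fun n => Submodule.span k
    {z | ∃ i j, i + p + j = n ∧ ∃ s t, z = u i s * c * u j t}
  have hprod : ∀ i j, ∀ x ∈ Submodule.span k (Set.range (u i)),
      ∀ y ∈ Submodule.span k (Set.range (u j)), x * c * y ∈ W (i + p + j) := by
    intro i j x hx y hy
    induction hx using Submodule.span_induction with
    | zero => simp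
    | add x x' _ _ h h' => rw [add_mul, add_mul]; exact add_mem h h'
    | smul r x _ h =>
      rw [smul_mul_assoc, smul_mul_assoc]; exact Submodule.smul_mem _ _ h
    | mem x hx =>
      obtain ⟨s, rfl⟩ := hx
      induction hy using Submodule.span_induction with
      | zero => simp
      | add x x' _ _ h h' => rw [mul_add]; exact add_mem h h'
      | smul r x _ h => rw [mul_smul_comm]; exact Submodule.smul_mem _ _ h
      | mem y hy =>
        obtain ⟨t, rfl⟩ := hy
        exact Submodule.subset_span ⟨i, j, rfl, s, t, rfl⟩
  have hW : ∀ i j, ∀ x ∈ 𝒜 i, ∀ y ∈ 𝒜 j, x * c * y ∈ W (i + p + j) := by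
    intro i j x hx y hy
    obtain ⟨x', hx', hxx⟩ := hspan i x hx
    obtain ⟨y', hy', hyy⟩ := hspan j y hy
    have h1 : (x - x') * c = 0 := by
      have := (aux_annih c hcc (x - x') hxx 1).1
      rwa [mul_one] at this
    have h2 : c * (y - y') = 0 := by
      have := (aux_annih c hcc (y - y') hyy 1).2
      rwa [mul_one] at this
    have h3 : x * c * y = x' * c * y' := by
      have h4 : x * c * y = x' * c * y' + (x - x') * c * y + x' * (c * (y - y')) := by
        noncomm_ring
      rw [h4, h1, h2]; simp
    rw [h3]
    exact hprod i j x' hx' y' hy'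
  have hle : 𝒜 n ≤ Submodule.span k (Set.range (u n)) ⊔ W n := by
    intro x hx
    obtain ⟨y, hy, hxy⟩ := hspan n x hx
    have hyn : y ∈ 𝒜 n := by
      refine (Submodule.span_le.mpr ?_) hy
      rintro _ ⟨s, rfl⟩
      exact hu n s
    have := aux_comp_mem 𝒜 c p hc W hW (x - y) hxy n
    rw [DirectSum.decompose_of_mem_same 𝒜 (sub_mem hx hyn)] at this
    rw [← add_sub_cancel y x]
    exact Submodule.add_mem_sup hy this
  have hfin1 : FiniteDimensional k (Submodule.span k (Set.range (u n))) :=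
    FiniteDimensional.span_of_finite k (Set.finite_range _)
  have hWn : FiniteDimensional k (W n) ∧ Module.finrank k (W n) ≤
      if p ≤ n then ∑ ij ∈ Finset.HasAntidiagonal.antidiagonal (n - p),
        quotDim k 𝒜 I ij.1 * quotDim k 𝒜 I ij.2 else 0 := by
    split_ifs with hpn
    · let T := Σ ij : Finset.HasAntidiagonal.antidiagonal (n - p),
        Fin (quotDim k 𝒜 I ij.1.1) × Fin (quotDim k 𝒜 I ij.1.2)
      let F : T → A := fun t => u t.1.1.1 t.2.1 * c * u t.1.1.2 t.2.2
      have hWF : W n ≤ Submodule.span k (Set.range F) := by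
        refine Submodule.span_mono ?_
        rintro z ⟨i, j, hij, s, t, rfl⟩
        exact ⟨⟨⟨(i, j), by rw [Finset.HasAntidiagonal.mem_antidiagonal]; simp only; omega⟩, (s, t)⟩, rfl⟩
      have hF : FiniteDimensional k (Submodule.span k (Set.range F)) :=
        FiniteDimensional.span_of_finite k (Set.finite_range _)
      refine ⟨Submodule.finiteDimensional_of_le hWF, (Submodule.finrank_mono hWF).trans ?_⟩
      refine (finrank_range_le_card F).trans ?_
      simp only [T, Fintype.card_sigma, Fintype.card_prod, Fintype.card_fin]
      rw [Finset.sum_coe_sort (Finset.HasAntidiagonal.antidiagonal (n - p))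
        (fun ij => quotDim k 𝒜 I ij.1 * quotDim k 𝒜 I ij.2)]
    · have : W n = ⊥ := by
        rw [Submodule.span_eq_bot]
        rintro z ⟨i, j, hij, -⟩
        omega
      rw [this]
      exact ⟨inferInstance, by simp⟩
  have := hWn.1
  calc Module.finrank k (𝒜 n)
      ≤ Module.finrank k ↥(Submodule.span k (Set.range (u n)) ⊔ W n) :=
        Submodule.finrank_mono hle
    _ ≤ _ := Submodule.finrank_add_le_finrank_add_finrank _ _
    _ ≤ _ := add_le_add ((finrank_range_le_card (u n)).trans (by simp [quotDim])) hWn.2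

theorem aux_summable_conv (d q : ℕ → ℕ) (p : ℕ) (r : ℝ≥0)
    (hle : ∀ n, d n ≤ q n + if p ≤ n then
      ∑ ij ∈ Finset.HasAntidiagonal.antidiagonal (n - p), q ij.1 * q ij.2 else 0)
    (hs : Summable fun n => |(q n : ℝ)| * (r : ℝ) ^ n) :
    Summable fun n => |(d n : ℝ)| * (r : ℝ) ^ n := by
  simp only [Nat.abs_cast] at hs ⊢
  have h0 : (0 : ℕ → ℝ) ≤ fun n => (q n : ℝ) * (r : ℝ) ^ n := fun n => by
    simp only [Pi.zero_apply]; positivity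
  have hprod : Summable fun x : ℕ × ℕ =>
      ((q x.1 : ℝ) * (r : ℝ) ^ x.1) * ((q x.2 : ℝ) * (r : ℝ) ^ x.2) :=
    hs.mul_of_nonneg hs h0 h0
  have hconv : Summable fun n : ℕ => ∑ x ∈ Finset.HasAntidiagonal.antidiagonal n,
      ((q x.1 : ℝ) * (r : ℝ) ^ x.1) * ((q x.2 : ℝ) * (r : ℝ) ^ x.2) :=
    summable_sum_mul_antidiagonal_of_summable_mul (f := fun n => (q n : ℝ) * (r : ℝ) ^ n)
      (g := fun n => (q n : ℝ) * (r : ℝ) ^ n) hprod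
  let g : ℕ → ℝ := fun n => (if p ≤ n then ∑ ij ∈ Finset.HasAntidiagonal.antidiagonal (n - p),
    (q ij.1 : ℝ) * q ij.2 else 0) * (r : ℝ) ^ n
  have hg : Summable g := by
    rw [← summable_nat_add_iff p]
    refine (hconv.mul_right ((r : ℝ) ^ p)).congr fun n => ?_
    simp only [g, le_add_iff_nonneg_left, zero_le, if_true, Nat.add_sub_cancel]
    rw [Finset.sum_mul, Finset.sum_mul]
    refine Finset.sum_congr (by rfl) fun ij hij => ?_
    rw [← Finset.HasAntidiagonal.mem_antidiagonal.mp hij, pow_add, pow_add]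
    ring
  refine Summable.of_nonneg_of_le (fun n => by positivity) (fun n => ?_) (hs.add hg)
  simp only [g]
  rw [← add_mul]
  refine mul_le_mul_of_nonneg_right ?_ (by positivity)
  have := hle n
  have h2 := (Nat.cast_le (α := ℝ)).mpr this
  push_cast at h2
  exact h2

theorem aux_semiprime [hfd : ∀ n, FiniteDimensional k (𝒜 n)] (hext : Extremal 𝒜)
    (c : A) (p : ℕ) (hc : c ∈ 𝒜 p) (hcc : ∀ x, c * x * c = 0) : c = 0 := by
  by_contra hc0
  have hlt := hext (idealGen k {c}) (aux_gen_twoSided c) (aux_gen_homog 𝒜 c p hc) (by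
    intro h
    have := aux_gen_mem (k := k) c 1 1
    rw [h, Submodule.mem_bot, one_mul, mul_one] at this
    exact hc0 this)
  obtain ⟨r, hr, hs⟩ := aux_exists_of_lt _ _ hlt
  refine absurd (aux_le_hradius _ r ?_) (not_le.mpr hr)
  have hle := aux_finrank_le 𝒜 c p hc hcc
  exact aux_summable_conv _ _ p r hle hs

theorem aux_prime_homog [hfd : ∀ n, FiniteDimensional k (𝒜 n)] (hext : Extremal 𝒜)
    (a b : A) (p : ℕ) (ha : a ∈ 𝒜 p) (hab : ∀ x, a * x * b = 0) : a = 0 ∨ b = 0 := by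
  by_contra! hne
  obtain ⟨ha0, hb0⟩ := hne
  let R : Submodule k A :=
    { carrier := {y | ∀ z, a * z * y = 0}
      zero_mem' := fun z => mul_zero _
      add_mem' := fun {x y} hx hy z => by rw [mul_add, hx z, hy z, add_zero]
      smul_mem' := fun r x hx z => by rw [mul_smul_comm, hx z, smul_zero] }
  have memR : ∀ y, y ∈ R ↔ ∀ z, a * z * y = 0 := fun y => Iff.rfl
  let L : Submodule k A :=
    { carrier := {x | ∀ y ∈ R, x * y = 0}
      zero_mem' := fun z _ => zero_mul _
      add_mem' := fun {x y} hx hy z hz => by rw [add_mul, hx z hz, hy z hz, add_zero]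
      smul_mem' := fun r x hx z hz => by rw [smul_mul_assoc, hx z hz, smul_zero] }
  have memL : ∀ x, x ∈ L ↔ ∀ y ∈ R, x * y = 0 := fun y => Iff.rfl
  have hR2 : IsTwoSidedSub R := by
    intro w y hy
    rw [memR] at hy
    constructor
    · intro z
      have := hy (z * w)
      simpa only [mul_assoc] using this
    · intro z
      rw [← mul_assoc, hy z, zero_mul]
  have hL2 : IsTwoSidedSub L := by
    intro w x hx
    rw [memL] at hx
    constructor
    · intro y hy
      rw [mul_assoc, hx y hy, mul_zero]
    · intro y hy
      rw [mul_assoc, hx _ (hR2 w y hy).1]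
  have hRh : IsHomogSub 𝒜 R := by
    intro y hy n z
    induction z using DirectSum.Decomposition.inductionOn 𝒜 with
    | zero => simp
    | add x x' h h' => rw [mul_add, add_mul, h, h', add_zero]
    | @homogeneous i z =>
      have hm : a * (z : A) ∈ 𝒜 (p + i) := SetLike.mul_mem_graded ha z.2
      rw [← DirectSum.coe_decompose_mul_add_of_left_mem 𝒜 hm, hy, aux_dec_zero]
  have hLh : IsHomogSub 𝒜 L := by
    classical
    intro x hx n y hy
    rw [← DirectSum.sum_support_decompose 𝒜 y, Finset.mul_sum]
    refine Finset.sum_eq_zero fun j _ => ?_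
    rw [← DirectSum.coe_decompose_mul_add_of_right_mem 𝒜 (SetLike.coe_mem _),
      hx _ (hRh y hy j), aux_dec_zero]
  have haL : a ∈ L := fun y hy => by
    have := hy 1
    rwa [mul_one] at this
  have hLR : ∀ n, ∀ c ∈ 𝒜 n, c ∈ L → c ∈ R → c = 0 := fun n c hcn hcL hcR =>
    aux_semiprime 𝒜 hext c n hcn fun x => by
      rw [mul_assoc]; exact hcL _ (hR2 x c hcR).1
  have h1 := hext R hR2 hRh fun h => hb0 (by
    have : b ∈ R := hab
    rwa [h, Submodule.mem_bot] at this)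
  have h2 := hext L hL2 hLh fun h => ha0 (by rwa [h, Submodule.mem_bot] at haL)
  obtain ⟨r1, hr1, hs1⟩ := aux_exists_of_lt _ _ h1
  obtain ⟨r2, hr2, hs2⟩ := aux_exists_of_lt _ _ h2
  have hs1 := aux_summable_mono _ (min r1 r2) _ (min_le_left _ _) hs1
  have hs2 := aux_summable_mono _ (min r1 r2) _ (min_le_right _ _) hs2
  have hr : hradius (fun n => (Module.finrank k (𝒜 n) : ℝ)) < ((min r1 r2 : ℝ≥0) : ℝ≥0∞) := by
    rcases min_choice r1 r2 with h | h <;> rw [h] <;> assumption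
  refine absurd (aux_le_hradius _ _ ?_) (not_le.mpr hr)
  simp only [Nat.abs_cast] at hs1 hs2 ⊢
  refine Summable.of_nonneg_of_le (fun n => by positivity) (fun n => ?_) (hs1.add hs2)
  rw [← add_mul]
  refine mul_le_mul_of_nonneg_right ?_ (by positivity)
  have hinj : Function.Injective (((R.comap (𝒜 n).subtype).mkQ).prod
      ((L.comap (𝒜 n).subtype).mkQ)) := by
    rw [← LinearMap.ker_eq_bot, LinearMap.ker_prod, Submodule.ker_mkQ, Submodule.ker_mkQ,
      eq_bot_iff]
    rintro ⟨x, hx⟩ ⟨hxR, hxL⟩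
    rw [Submodule.mem_bot]
    exact Subtype.ext (hLR n x hx hxL hxR)
  have := LinearMap.finrank_le_finrank_of_injective hinj
  rw [Module.finrank_prod] at this
  exact_mod_cast this

theorem aux_exists_top (a : A) (ha : a ≠ 0) : ∃ m, (DirectSum.decompose 𝒜 a m : A) ≠ 0 ∧
    ∀ i, m < i → (DirectSum.decompose 𝒜 a i : A) = 0 := by
  classical
  have hne : (DirectSum.decompose 𝒜 a).support.Nonempty := by
    rw [Finset.nonempty_iff_ne_empty]
    intro h
    apply ha
    rw [← DirectSum.sum_support_decompose 𝒜 a, h, Finset.sum_empty]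
  refine ⟨(DirectSum.decompose 𝒜 a).support.max' hne, ?_, fun i hi => ?_⟩
  · have := Finset.max'_mem _ hne
    rw [DFinsupp.mem_support_iff] at this
    simpa using this
  · by_contra h
    have hm : i ∈ (DirectSum.decompose 𝒜 a).support := by
      rw [DFinsupp.mem_support_iff]
      simpa using h
    exact absurd (Finset.le_max' _ _ hm) (not_le.mpr hi)

theorem aux_top_mul (a b : A) (m n : ℕ)
    (ha : ∀ i, m < i → (DirectSum.decompose 𝒜 a i : A) = 0)
    (hb : ∀ i, n < i → (DirectSum.decompose 𝒜 b i : A) = 0) :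
    (DirectSum.decompose 𝒜 (a * b) (m + n) : A) =
      DirectSum.decompose 𝒜 a m * DirectSum.decompose 𝒜 b n := by
  rw [DirectSum.decompose_mul, DirectSum.coe_mul_apply_eq_sum_antidiagonal]
  refine Finset.sum_eq_single (m, n) (fun ij hij hne => ?_) (fun h => ?_)
  · rw [Finset.HasAntidiagonal.mem_antidiagonal] at hij
    rcases lt_trichotomy m ij.1 with h | h | h
    · rw [ha _ h, zero_mul]
    · exact absurd (Prod.ext h.symm (by simp only; omega)) hne
    · rw [hb ij.2 (by omega), mul_zero]
  · exact absurd (Finset.HasAntidiagonal.mem_antidiagonal.mpr (by rfl)) h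

end Helpers

/-- **Theorem 5.4**: an extremal graded algebra is prime. -/
theorem stmt9 {k A : Type} [Field k] [Ring A] [Algebra k A]
    (𝒜 : ℕ → Submodule k A) [GradedAlgebra 𝒜]
    [hfd : ∀ n, FiniteDimensional k (𝒜 n)]
    (hext : Extremal 𝒜) :
    ∀ a b : A, (∀ x : A, a * x * b = 0) → a = 0 ∨ b = 0 := by
  intro a b hab
  by_contra! hne
  obtain ⟨m, hm, hm'⟩ := aux_exists_top 𝒜 a hne.1
  obtain ⟨n, hn, hn'⟩ := aux_exists_top 𝒜 b hne.2
  have key : ∀ x : A, (DirectSum.decompose 𝒜 a m : A) * x * (DirectSum.decompose 𝒜 b n : A) = 0 := by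
    intro x
    induction x using DirectSum.Decomposition.inductionOn 𝒜 with
    | zero => simp
    | add x x' h h' => rw [mul_add, add_mul, h, h', add_zero]
    | @homogeneous i x =>
      have h1 : ∀ j, m + i < j → (DirectSum.decompose 𝒜 (a * x) j : A) = 0 := by
        intro j hj
        obtain ⟨l, rfl⟩ : ∃ l, j = l + i := ⟨j - i, by omega⟩
        rw [DirectSum.coe_decompose_mul_add_of_right_mem 𝒜 x.2, hm' l (by omega), zero_mul]
      have h2 := aux_top_mul 𝒜 (a * x) b (m + i) n h1 hn'
      rw [hab, aux_dec_zero, DirectSum.coe_decompose_mul_add_of_right_mem 𝒜 x.2] at h2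
      exact h2.symm

  rcases aux_prime_homog 𝒜 hext _ _ m (SetLike.coe_mem _) key with h | h
  · exact hm h
  · exact hn h
end

section
/- Let A be an associative unital k-algebra equipped with an exhaustive increasing filtration by finite-dimensional k-subspaces F_0 ⊆ F_1 ⊆ F_2 ⊆ ⋯ with 1 ∈ F_0, F_i·F_j ⊆ F_{i+j}, and ⋃_i F_i = A, and let gr A = ⊕_{i≥0} F_i/F_{i−1} (with F_{−1} = 0) be the associated graded algebra with multiplication induced by that of A. If gr A is extremal, then A is a prime ring: for all a, b ∈ A, if a·x·b = 0 for every x ∈ A, then a = 0 or b = 0. -/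
open scoped ENNReal NNReal
open PowerSeries

section Helpers

theorem summable_of_lt_hradius {a : ℕ → ℝ} {ρ : ℝ≥0∞} (h : ρ < hradius a) :
    ∃ r : ℝ≥0, ρ < r ∧ Summable fun n => |a n| * (r : ℝ) ^ n := by
  unfold hradius at h
  rw [lt_iSup_iff] at h
  obtain ⟨r, hr⟩ := h
  rw [lt_iSup_iff] at hr
  obtain ⟨hs, hr⟩ := hr
  exact ⟨r, hr, hs⟩

theorem le_hradius {a : ℕ → ℝ} {r : ℝ≥0} (h : Summable fun n => |a n| * (r : ℝ) ^ n) :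
    (r : ℝ≥0∞) ≤ hradius a := by
  unfold hradius
  exact le_iSup₂_of_le r h le_rfl

theorem summable_mono_radius {a : ℕ → ℝ} {r s : ℝ≥0} (hsr : s ≤ r)
    (h : Summable fun n => |a n| * (r : ℝ) ^ n) :
    Summable fun n => |a n| * (s : ℝ) ^ n := by
  refine Summable.of_nonneg_of_le (fun n => by positivity) (fun n => ?_) h
  have : (s : ℝ) ≤ r := by exact_mod_cast hsr
  gcongr

variable {k G : Type} [Field k] [Ring G] [Algebra k G]
    (𝒢 : ℕ → Submodule k G) [GradedAlgebra 𝒢]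

/-- two-sided ideal generated by `c` -/
def prIdeal (k : Type) {G : Type} [Field k] [Ring G] [Algebra k G] (c : G) : Submodule k G :=
  Submodule.span k {x : G | ∃ g h : G, x = g * c * h}

theorem prIdeal_two (c : G) : IsTwoSidedSub (prIdeal k c) := by
  intro a x hx
  unfold prIdeal at *
  induction hx using Submodule.span_induction with
  | mem x hx =>
    obtain ⟨g, h, rfl⟩ := hx
    exact ⟨Submodule.subset_span ⟨a * g, h, by simp only [mul_assoc]⟩,
      Submodule.subset_span ⟨g, h * a, by simp only [mul_assoc]⟩⟩
  | zero => simp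
  | add x y _ _ hx hy =>
    rw [mul_add, add_mul]
    exact ⟨add_mem hx.1 hy.1, add_mem hx.2 hy.2⟩
  | smul r x _ hx =>
    rw [mul_smul_comm, smul_mul_assoc]
    exact ⟨Submodule.smul_mem _ _ hx.1, Submodule.smul_mem _ _ hx.2⟩

theorem mem_prIdeal (c : G) : c ∈ prIdeal k c :=
  Submodule.subset_span ⟨1, 1, by simp⟩

/-- degree `n` part of the ideal generated by `c`. -/
def prPart (c : G) (m : ℕ) : Submodule k G :=
  ⨆ p ∈ Finset.HasAntidiagonal.antidiagonal m, 𝒢 p.1 * Submodule.span k {c} * 𝒢 p.2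

theorem prPart_le (c : G) (m : ℕ) : prPart 𝒢 c m ≤ prIdeal k c := by
  unfold prPart
  refine iSup₂_le fun p _ => ?_
  rw [Submodule.mul_le]
  intro x hx y _
  refine (prIdeal_two c y x ?_).2
  revert x
  change _ ≤ prIdeal k c
  rw [Submodule.mul_le]
  intro x _ y hy
  refine (prIdeal_two c x y ?_).1
  obtain ⟨r, rfl⟩ := Submodule.mem_span_singleton.1 hy
  exact Submodule.smul_mem _ _ (mem_prIdeal c)

theorem decompose_prIdeal {c : G} {d : ℕ} (hc : c ∈ 𝒢 d) {x : G} (hx : x ∈ prIdeal k c) (n : ℕ) :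
    (DirectSum.decompose 𝒢 x n : G) ∈ prPart 𝒢 c (n - d) := by
  unfold prIdeal at hx
  induction hx using Submodule.span_induction with
  | mem x hx =>
    obtain ⟨g, h, rfl⟩ := hx
    induction g using DirectSum.Decomposition.inductionOn 𝒢 with
    | zero => simp
    | add g g' hg hg' =>
      rw [add_mul, add_mul, DirectSum.decompose_add]
      exact add_mem hg hg'
    | @homogeneous i g =>
      induction h using DirectSum.Decomposition.inductionOn 𝒢 with
      | zero => simp
      | add g g' hg hg' =>
        rw [mul_add, DirectSum.decompose_add]
        exact add_mem hg hg'
      | @homogeneous j h =>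
        have hm : (g : G) * c * h ∈ 𝒢 (i + d + j) :=
          SetLike.mul_mem_graded (SetLike.mul_mem_graded g.2 hc) h.2
        by_cases hn : i + d + j = n
        · subst hn
          rw [DirectSum.decompose_of_mem_same 𝒢 hm]
          unfold prPart
          refine Submodule.mem_iSup_of_mem (i, j) (Submodule.mem_iSup_of_mem ?_ ?_)
          · rw [Finset.HasAntidiagonal.mem_antidiagonal]; dsimp; omega
          · exact Submodule.mul_mem_mul (Submodule.mul_mem_mul g.2
              (Submodule.mem_span_singleton_self c)) h.2
        · rw [DirectSum.decompose_of_mem_ne 𝒢 hm hn]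
          exact zero_mem _
  | zero => simp
  | add x y _ _ hx hy =>
    rw [DirectSum.decompose_add]
    exact add_mem hx hy
  | smul r x _ hx =>
    rw [DirectSum.decompose_smul]
    exact Submodule.smul_mem _ _ hx

theorem prIdeal_homog {c : G} {d : ℕ} (hc : c ∈ 𝒢 d) : IsHomogSub 𝒢 (prIdeal k c) :=
  fun _ hx n => prPart_le 𝒢 c _ (decompose_prIdeal 𝒢 hc hx n)

theorem fd_mul (U V : Submodule k G) [hU : FiniteDimensional k U] [hV : FiniteDimensional k V] :
    FiniteDimensional k (U * V : Submodule k G) :=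
  Module.Finite.iff_fg.2 ((Module.Finite.iff_fg.1 hU).mul (Module.Finite.iff_fg.1 hV))

theorem fd_triple (U V : Submodule k G) (c : G) [FiniteDimensional k U] [FiniteDimensional k V] :
    FiniteDimensional k (U * Submodule.span k {c} * V : Submodule k G) := by
  have := fd_mul U (Submodule.span k {c})
  exact fd_mul _ V

theorem finrank_mul_le' (U V : Submodule k G) [FiniteDimensional k U] [FiniteDimensional k V] :
    Module.finrank k (U * V : Submodule k G) ≤ Module.finrank k U * Module.finrank k V := by
  have h : U * V = LinearMap.range (Submodule.mulMap U V) := (Submodule.mulMap_range U V).symm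
  rw [h]
  refine (LinearMap.finrank_range_le _).trans ?_
  rw [Module.finrank_tensorProduct]

theorem exists_compl_part (L : Submodule k G) (i : ℕ) :
    ∃ C : Submodule k G, C ≤ 𝒢 i ∧ 𝒢 i ≤ C ⊔ (L ⊓ 𝒢 i) ∧
      Module.finrank k C = quotDim k 𝒢 L i := by
  obtain ⟨C, hC⟩ := Submodule.exists_isCompl (L.comap (𝒢 i).subtype)
  refine ⟨C.map (𝒢 i).subtype, Submodule.map_subtype_le _ _, ?_, ?_⟩
  · intro x hx
    have : (⟨x, hx⟩ : 𝒢 i) ∈ L.comap (𝒢 i).subtype ⊔ C := by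
      rw [hC.sup_eq_top]; trivial
    obtain ⟨y, hy, z, hz, hyz⟩ := Submodule.mem_sup.1 this
    have e : (y : G) + z = x := congrArg Subtype.val hyz
    rw [← e]
    exact add_mem (Submodule.mem_sup_right ⟨hy, y.2⟩)
      (Submodule.mem_sup_left ⟨z, hz, rfl⟩)
  · rw [Submodule.finrank_map_subtype_eq]
    exact (Submodule.quotientEquivOfIsCompl _ _ hC).finrank_eq.symm

theorem finrank_finsetSup_le {ι : Type} (s : Finset ι) (V : ι → Submodule k G)
    (hV : ∀ i, FiniteDimensional k (V i)) :
    Module.finrank k (⨆ i ∈ s, V i : Submodule k G) ≤ ∑ i ∈ s, Module.finrank k (V i) := by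
  classical
  rw [← Finset.sup_eq_iSup]
  induction s using Finset.induction_on with
  | empty => simp
  | insert a s ha ih =>
    rw [Finset.sup_insert, Finset.sum_insert ha]
    haveI : FiniteDimensional k (s.sup V : Submodule k G) := Submodule.finiteDimensional_finset_sup s V
    exact (Submodule.finrank_add_le_finrank_add_finrank _ _).trans (by gcongr)

theorem prIdeal_mul_zero {c y : G} (h : ∀ g, c * g * y = 0) {x : G} (hx : x ∈ prIdeal k c) :
    x * y = 0 := by
  unfold prIdeal at hx
  induction hx using Submodule.span_induction with
  | mem x hx =>
    obtain ⟨g, g', rfl⟩ := hx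
    rw [mul_assoc g, mul_assoc g, h, mul_zero]
  | zero => simp
  | add x y _ _ hx hy => rw [add_mul, hx, hy, add_zero]
  | smul r x _ hx => rw [smul_mul_assoc, hx, smul_zero]

theorem mul_prIdeal_zero {c y : G} (h : ∀ g, y * g * c = 0) {x : G} (hx : x ∈ prIdeal k c) :
    y * x = 0 := by
  unfold prIdeal at hx
  induction hx using Submodule.span_induction with
  | mem x hx =>
    obtain ⟨g, g', rfl⟩ := hx
    rw [← mul_assoc y, ← mul_assoc y, h, zero_mul]
  | zero => simp
  | add x y _ _ hx hy => rw [mul_add, hx, hy, add_zero]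
  | smul r x _ hx => rw [mul_smul_comm, hx, smul_zero]

theorem finrank_prPart_le [hgfd : ∀ i, FiniteDimensional k (𝒢 i)] {c : G}
    (hcc : ∀ g, c * g * c = 0) (m : ℕ) :
    Module.finrank k (prPart 𝒢 c m) ≤ ∑ p ∈ Finset.HasAntidiagonal.antidiagonal m,
      quotDim k 𝒢 (prIdeal k c) p.1 * quotDim k 𝒢 (prIdeal k c) p.2 := by
  choose C hC1 hC2 hC3 using exists_compl_part 𝒢 (prIdeal k c)
  haveI hCf : ∀ i, FiniteDimensional k (C i) := fun i =>
    Submodule.finiteDimensional_of_le (hC1 i)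
  have hf : ∀ i j, FiniteDimensional k (𝒢 i * Submodule.span k {c} * 𝒢 j : Submodule k G) := by
    intro i j
    exact fd_triple _ _ c
  have hf1 : ∀ i, FiniteDimensional k (C i * Submodule.span k {c} : Submodule k G) :=
    fun i => fd_mul _ _
  have hf2 : ∀ i j, FiniteDimensional k (C i * Submodule.span k {c} * C j : Submodule k G) :=
    fun i j => fd_triple _ _ c
  refine (finrank_finsetSup_le _ (fun p : ℕ × ℕ => 𝒢 p.1 * Submodule.span k {c} * 𝒢 p.2)
    (fun p => hf p.1 p.2)).trans ?_
  refine Finset.sum_le_sum fun p _ => ?_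
  have key : 𝒢 p.1 * Submodule.span k {c} * 𝒢 p.2 ≤
      (C p.1 * Submodule.span k {c}) * C p.2 := by
    have h1 : 𝒢 p.1 * Submodule.span k {c} ≤ C p.1 * Submodule.span k {c} := by
      rw [Submodule.mul_le]
      intro x hx y hy
      obtain ⟨u, hu, v, hv, rfl⟩ := Submodule.mem_sup.1 (hC2 _ hx)
      obtain ⟨r, rfl⟩ := Submodule.mem_span_singleton.1 hy
      rw [add_mul, mul_smul_comm r v, prIdeal_mul_zero hcc hv.1, smul_zero, add_zero]
      exact Submodule.mul_mem_mul hu hy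
    refine (mul_le_mul_left h1 _).trans ?_
    rw [mul_assoc, mul_assoc]
    refine mul_le_mul_right ?_ _
    rw [Submodule.mul_le]
    intro y hy x hx
    obtain ⟨u, hu, v, hv, rfl⟩ := Submodule.mem_sup.1 (hC2 _ hx)
    obtain ⟨r, rfl⟩ := Submodule.mem_span_singleton.1 hy
    rw [mul_add, smul_mul_assoc r c v, mul_prIdeal_zero hcc hv.1, smul_zero, add_zero]
    exact Submodule.mul_mem_mul hy hu
  refine (Submodule.finrank_mono key).trans ?_
  refine (finrank_mul_le' _ _).trans ?_
  rw [hC3 p.2]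
  refine Nat.mul_le_mul_right _ ?_
  refine (finrank_mul_le' _ _).trans ?_
  rw [hC3 p.1]
  have : Module.finrank k (Submodule.span k {c}) ≤ 1 := by
    simpa using finrank_span_le_card (R := k) ({c} : Set G)
  nlinarith

theorem semiprime_of_extremal [hgfd : ∀ i, FiniteDimensional k (𝒢 i)] (hext : Extremal 𝒢)
    {c : G} {d : ℕ} (hc : c ∈ 𝒢 d) (hcc : ∀ g, c * g * c = 0) : c = 0 := by
  by_contra hne
  set L := prIdeal k c with hL
  have hLne : L ≠ ⊥ := by
    intro h
    have := mem_prIdeal (k := k) c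
    rw [← hL, h] at this
    exact hne ((Submodule.mem_bot k).1 this)
  have h1 := hext L (prIdeal_two c) (prIdeal_homog 𝒢 hc) hLne
  obtain ⟨r, hr, hs⟩ := summable_of_lt_hradius h1
  refine absurd (le_hradius (r := r) ?_) (not_le.2 hr)
  simp only [Nat.abs_cast] at hs ⊢
  set q : ℕ → ℕ := quotDim k 𝒢 L with hq
  have bound : ∀ n, Module.finrank k (𝒢 n) ≤ q n +
      ∑ p ∈ Finset.HasAntidiagonal.antidiagonal (n - d), q p.1 * q p.2 := by
    intro n
    have e := Submodule.finrank_quotient_add_finrank (L.comap (𝒢 n).subtype)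
    have e2 : Module.finrank k (L.comap (𝒢 n).subtype) ≤ Module.finrank k (prPart 𝒢 c (n - d)) := by
      rw [← Submodule.finrank_map_subtype_eq]
      haveI : FiniteDimensional k (prPart 𝒢 c (n - d)) := by
        unfold prPart
        have : ∀ p : ℕ × ℕ, FiniteDimensional k
            (𝒢 p.1 * Submodule.span k {c} * 𝒢 p.2 : Submodule k G) := fun p => fd_triple _ _ c
        rw [← Finset.sup_eq_iSup]
        exact Submodule.finiteDimensional_finset_sup _ _
      apply Submodule.finrank_mono
      rintro _ ⟨x, hx, rfl⟩
      have := decompose_prIdeal 𝒢 hc hx n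
      rwa [Submodule.subtype_apply, DirectSum.decompose_of_mem_same 𝒢 x.2] at this
    have e3 := finrank_prPart_le 𝒢 hcc (n - d)
    have e4 : q n = Module.finrank k (↥(𝒢 n) ⧸ (L.comap (𝒢 n).subtype)) := rfl
    rw [← e, ← e4]
    exact Nat.add_le_add_left (e2.trans e3) _
  have hprod : Summable fun m => ∑ p ∈ Finset.HasAntidiagonal.antidiagonal m,
      ((q p.1 : ℝ) * (r : ℝ) ^ p.1) * ((q p.2 : ℝ) * (r : ℝ) ^ p.2) := by
    have hn : Summable fun n => ‖(q n : ℝ) * (r : ℝ) ^ n‖ := hs.norm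
    exact (summable_norm_sum_mul_antidiagonal_of_summable_norm hn hn).of_norm
  have hsh : Summable fun n => ((∑ p ∈ Finset.HasAntidiagonal.antidiagonal (n - d), q p.1 * q p.2 : ℕ) : ℝ)
      * (r : ℝ) ^ n := by
    rw [← summable_nat_add_iff d]
    refine (hprod.mul_right ((r : ℝ) ^ d)).congr fun m => ?_
    rw [Nat.add_sub_cancel]
    push_cast
    rw [Finset.sum_mul, Finset.sum_mul]
    refine Finset.sum_congr rfl fun p hp => ?_
    rw [← Finset.HasAntidiagonal.mem_antidiagonal.1 hp]
    ring
  refine Summable.of_nonneg_of_le (fun n => by positivity) (fun n => ?_) (hs.add hsh)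
  rw [← add_mul]
  have : (Module.finrank k (𝒢 n) : ℝ) ≤ (q n : ℝ) +
      ((∑ p ∈ Finset.HasAntidiagonal.antidiagonal (n - d), q p.1 * q p.2 : ℕ) : ℝ) := by
    exact_mod_cast bound n
  gcongr

/-- right annihilator of `aG`. -/
def annR (k : Type) {G : Type} [Field k] [Ring G] [Algebra k G] (a : G) : Submodule k G where
  carrier := {y | ∀ g, a * g * y = 0}
  add_mem' := by
    intro x y hx hy g
    rw [mul_add, hx, hy, add_zero]
  zero_mem' := by intro g; simp
  smul_mem' := by
    intro r x hx g
    rw [mul_smul_comm, hx, smul_zero]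

theorem annR_two (a : G) : IsTwoSidedSub (annR k a) := by
  intro g x hx
  refine ⟨fun h => ?_, fun h => ?_⟩
  · rw [← mul_assoc, mul_assoc a h g]; exact hx _
  · rw [← mul_assoc, hx h, zero_mul]

theorem annR_homog {a : G} {d : ℕ} (ha : a ∈ 𝒢 d) : IsHomogSub 𝒢 (annR k a) := by
  intro x hx n g
  induction g using DirectSum.Decomposition.inductionOn 𝒢 with
  | zero => simp
  | add g g' hg hg' => rw [mul_add, add_mul, hg, hg', add_zero]
  | @homogeneous i g =>
    have hm : a * (g : G) ∈ 𝒢 (d + i) := SetLike.mul_mem_graded ha g.2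
    rw [← DirectSum.coe_decompose_mul_add_of_left_mem 𝒢 hm, hx (g : G)]
    simp

theorem prime_of_extremal [hgfd : ∀ i, FiniteDimensional k (𝒢 i)] (hext : Extremal 𝒢)
    {a b : G} {d e : ℕ} (ha : a ∈ 𝒢 d) (hb : b ∈ 𝒢 e) (hab : ∀ g, a * g * b = 0)
    (ha0 : a ≠ 0) (hb0 : b ≠ 0) : False := by
  set I := prIdeal k a with hI
  set J := annR k a with hJ
  have hIh : IsHomogSub 𝒢 I := prIdeal_homog 𝒢 ha
  have hJh : IsHomogSub 𝒢 J := annR_homog 𝒢 ha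
  have hIne : I ≠ ⊥ := fun h => ha0 ((Submodule.mem_bot k).1 (h ▸ mem_prIdeal (k := k) a))
  have hJne : J ≠ ⊥ := fun h => hb0 ((Submodule.mem_bot k).1
    (h ▸ (show b ∈ annR k a from hab)))
  have hdis : ∀ n, ∀ c ∈ 𝒢 n, c ∈ I → c ∈ J → c = 0 := by
    intro n c hc hcI hcJ
    refine semiprime_of_extremal 𝒢 hext hc fun g => ?_
    rw [mul_assoc]
    refine prIdeal_mul_zero (k := k) (c := a) (fun g' => ?_) hcI
    exact (annR_two a g c hcJ).1 g'
  obtain ⟨r, hr, hs⟩ := summable_of_lt_hradius (hext I (prIdeal_two a) hIh hIne)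
  obtain ⟨r', hr', hs'⟩ := summable_of_lt_hradius (hext J (annR_two a) hJh hJne)
  have h1 := summable_mono_radius (min_le_left r r') hs
  have h2 := summable_mono_radius (min_le_right r r') hs'
  have hlt : hradius (fun n => (Module.finrank k (𝒢 n) : ℝ)) < ((min r r' : ℝ≥0) : ℝ≥0∞) := by
    rcases min_choice r r' with h | h <;> rw [h] <;> assumption
  refine absurd (le_hradius (r := min r r') ?_) (not_le.2 hlt)
  refine Summable.of_nonneg_of_le (fun n => by positivity) (fun n => ?_) (h1.add h2)
  rw [← add_mul]
  simp only [Nat.abs_cast]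
  have : Module.finrank k (𝒢 n) ≤ quotDim k 𝒢 I n + quotDim k 𝒢 J n := by
    unfold quotDim
    rw [← Module.finrank_prod]
    refine LinearMap.finrank_le_finrank_of_injective
      (f := (I.comap (𝒢 n).subtype).mkQ.prod (J.comap (𝒢 n).subtype).mkQ) ?_
    rw [injective_iff_map_eq_zero]
    intro x hx
    have hx1 : (I.comap (𝒢 n).subtype).mkQ x = 0 := congrArg Prod.fst hx
    have hx2 : (J.comap (𝒢 n).subtype).mkQ x = 0 := congrArg Prod.snd hx
    rw [Submodule.mkQ_apply, Submodule.Quotient.mk_eq_zero] at hx1 hx2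
    exact Subtype.ext (hdis n x x.2 hx1 hx2)
  have : (Module.finrank k (𝒢 n) : ℝ) ≤ (quotDim k 𝒢 I n : ℝ) + (quotDim k 𝒢 J n : ℝ) := by
    exact_mod_cast this
  gcongr

end Helpers

/-- **Corollary 5.5**: let `A` be an algebra with an exhaustive increasing filtration
`F_0 ⊆ F_1 ⊆ ⋯` by finite-dimensional subspaces with `1 ∈ F_0` and `F_i·F_j ⊆ F_{i+j}`.
If the associated graded algebra `gr A` (here encoded as a graded algebra `G` together
with the canonical surjections `φ_i : F_i → G_i` with kernel `F_{i-1}`, compatible with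
multiplication and units) is extremal, then `A` is prime. -/
theorem stmt11 {k A G : Type} [Field k] [Ring A] [Algebra k A] [Ring G] [Algebra k G]
    (F : ℕ → Submodule k A)
    (hmono : Monotone F)
    (hone : (1 : A) ∈ F 0)
    (hmul : ∀ i j, F i * F j ≤ F (i + j))
    (hexh : ∀ a : A, ∃ i, a ∈ F i)
    (hfd : ∀ i, FiniteDimensional k (F i))
    (𝒢 : ℕ → Submodule k G) [GradedAlgebra 𝒢]
    [hgfd : ∀ i, FiniteDimensional k (𝒢 i)]
    (φ : ∀ i, F i →ₗ[k] 𝒢 i)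
    (hsurj : ∀ i, Function.Surjective (φ i))
    (hker0 : ∀ x : F 0, φ 0 x = 0 ↔ (x : A) = 0)
    (hkerS : ∀ i (x : F (i + 1)), φ (i + 1) x = 0 ↔ (x : A) ∈ F i)
    (hφone : ((φ 0 ⟨1, hone⟩ : 𝒢 0) : G) = 1)
    (hφmul : ∀ i j (x : F i) (y : F j),
      ((φ (i + j) ⟨(x : A) * (y : A),
          hmul i j (Submodule.mul_mem_mul x.2 y.2)⟩ : 𝒢 (i + j)) : G) =
        ((φ i x : 𝒢 i) : G) * ((φ j y : 𝒢 j) : G))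
    (hext : Extremal 𝒢) :
    ∀ a b : A, (∀ x : A, a * x * b = 0) → a = 0 ∨ b = 0 := by
  intro a b hab
  by_contra! hne
  obtain ⟨ha0, hb0⟩ := hne
  have hsym : ∀ a : A, a ≠ 0 → ∃ i, ∃ h : a ∈ F i, φ i ⟨a, h⟩ ≠ 0 := by
    classical
    intro a ha
    have hmin : ∀ m < Nat.find (hexh a), a ∉ F m := fun m hm => Nat.find_min (hexh a) hm
    have hmem := Nat.find_spec (hexh a)
    generalize Nat.find (hexh a) = i at hmin hmem
    refine ⟨i, hmem, ?_⟩
    cases i with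
    | zero => exact fun h => ha ((hker0 _).1 h)
    | succ i => exact fun h => hmin i (Nat.lt_succ_self i) ((hkerS i _).1 h)
  obtain ⟨i, hai, hi⟩ := hsym a ha0
  obtain ⟨j, hbj, hj⟩ := hsym b hb0
  refine prime_of_extremal 𝒢 hext (φ i ⟨a, hai⟩).2 (φ j ⟨b, hbj⟩).2 (fun g => ?_)
    (fun h => hi (Subtype.ext h)) (fun h => hj (Subtype.ext h))
  induction g using DirectSum.Decomposition.inductionOn 𝒢 with
  | zero => simp
  | add g g' hg hg' => rw [mul_add, add_mul, hg, hg', add_zero]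
  | @homogeneous n g =>
    obtain ⟨x, rfl⟩ := hsurj n g
    rw [← hφmul, ← hφmul]
    have : ∀ h : a * x * b ∈ F (i + n + j), φ (i + n + j) ⟨a * x * b, h⟩ = 0 := by
      intro h
      have e : (⟨a * x * b, h⟩ : F (i + n + j)) = 0 := Subtype.ext (hab x)
      rw [e, map_zero]
    rw [this]
    rfl
end

section
/- Let A = k⟨X⟩/I_A and B = k⟨Y⟩/I_B be connected graded algebras, and let C = k⟨X ⊔ Y⟩/J be the free product A*B, where J is the two-sided ideal generated by I_A ∪ I_B. Then the Hilbert series satisfy C(t)^{−1} = A(t)^{−1} + B(t)^{−1} − 1 as formal power series (all three series are invertible since their constant terms equal 1). -/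
open scoped ENNReal NNReal
open PowerSeries

noncomputable section

/-- The weight-`n` homogeneous component of the free algebra `k⟨X⟩`, where the generators
are given weights by `w : X → ℕ`: the span of all products of generators of total
weight `n`. -/
def wdeg (k : Type) [Field k] {X : Type} (w : X → ℕ) (n : ℕ) :
    Submodule k (FreeAlgebra k X) :=
  Submodule.span k
    {a | ∃ l : List X, (l.map w).sum = n ∧ a = (l.map (FreeAlgebra.ι k)).prod}

/-- A submodule is homogeneous w.r.t. a family of components `𝒜` if it is spanned by
its homogeneous elements. -/
def IsHomogSpan {k A : Type} [Field k] [Ring A] [Algebra k A]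
    (𝒜 : ℕ → Submodule k A) (I : Submodule k A) : Prop :=
  I ≤ Submodule.span k {x : A | x ∈ I ∧ ∃ n, x ∈ 𝒜 n}


namespace FreeProd

open Submodule

lemma tr {k M N : Type} [Field k] [AddCommGroup M] [AddCommGroup N] [Module k M] [Module k N]
    (f : M →ₗ[k] N) {P : Submodule k M} {P' : Submodule k N} {x : M} (hx : x ∈ P)
    (h : P ≤ Submodule.comap f P') : f x ∈ P' := h hx

/-- The monomial attached to a word. -/
def mon (k : Type) [Field k] {X : Type} (l : List X) : FreeAlgebra k X :=
  (l.map (FreeAlgebra.ι k)).prod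

/-- The weight of a word. -/
def wt {X : Type} (w : X → ℕ) (l : List X) : ℕ := (l.map w).sum

lemma mon_nil (k : Type) [Field k] {X : Type} : mon k ([] : List X) = 1 := by simp [mon]

lemma mon_cons (k : Type) [Field k] {X : Type} (x : X) (l : List X) :
    mon k (x :: l) = FreeAlgebra.ι k x * mon k l := by simp [mon]

lemma mon_append (k : Type) [Field k] {X : Type} (l l' : List X) :
    mon k (l ++ l') = mon k l * mon k l' := by simp [mon]

lemma wt_cons {X : Type} (w : X → ℕ) (x : X) (l : List X) : wt w (x :: l) = w x + wt w l := by
  simp [wt]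

lemma wt_append {X : Type} (w : X → ℕ) (l l' : List X) :
    wt w (l ++ l') = wt w l + wt w l' := by
  simp [wt]

lemma span_mon (k : Type) [Field k] (X : Type) :
    span k (Set.range (mon k : List X → FreeAlgebra k X)) = ⊤ := by
  rw [eq_top_iff]
  rintro f -
  induction f using FreeAlgebra.induction with
  | grade0 r =>
    rw [Algebra.algebraMap_eq_smul_one]
    exact smul_mem _ _ (subset_span ⟨[], mon_nil k⟩)
  | grade1 x => exact subset_span ⟨[x], by simp [mon]⟩
  | mul a b ha hb =>
    have := Submodule.mul_mem_mul ha hb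
    rw [span_mul_span] at this
    refine span_mono ?_ this
    rintro _ ⟨_, ⟨l, rfl⟩, _, ⟨l', rfl⟩, rfl⟩
    exact ⟨l ++ l', mon_append k l l'⟩
  | add a b ha hb => exact add_mem ha hb

/-- The algebra map recording weights in a polynomial variable. -/
def gradHom (k : Type) [Field k] {X : Type} (w : X → ℕ) :
    FreeAlgebra k X →ₐ[k] Polynomial (FreeAlgebra k X) :=
  FreeAlgebra.lift k (fun x => Polynomial.monomial (w x) (FreeAlgebra.ι k x))

lemma gradHom_mon (k : Type) [Field k] {X : Type} (w : X → ℕ) (l : List X) :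
    gradHom k w (mon k l) = Polynomial.monomial (wt w l) (mon k l) := by
  induction l with
  | nil => simp [mon_nil, wt]
  | cons x l ih =>
    rw [mon_cons, map_mul, ih, wt_cons, ← Polynomial.monomial_mul_monomial]
    simp [gradHom]

/-- Projection to the weight `n` component. -/
def proj (k : Type) [Field k] {X : Type} (w : X → ℕ) (n : ℕ) :
    FreeAlgebra k X →ₗ[k] FreeAlgebra k X :=
  ((Polynomial.lcoeff (FreeAlgebra k X) n).restrictScalars k) ∘ₗ (gradHom k w).toLinearMap

lemma proj_mon (k : Type) [Field k] {X : Type} (w : X → ℕ) (n : ℕ) (l : List X) :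
    proj k w n (mon k l) = if wt w l = n then mon k l else 0 := by
  simp [proj, gradHom_mon, Polynomial.coeff_monomial]

lemma wdeg_eq (k : Type) [Field k] {X : Type} (w : X → ℕ) (n : ℕ) :
    wdeg k w n = span k (mon k '' {l | wt w l = n}) := by
  unfold wdeg
  congr 1
  ext a
  simp only [Set.mem_ofPred_eq, Set.mem_image, wt, mon]
  constructor
  · rintro ⟨l, h, rfl⟩; exact ⟨l, h, rfl⟩
  · rintro ⟨l, h, rfl⟩; exact ⟨l, h, rfl⟩

lemma proj_wdeg (k : Type) [Field k] {X : Type} (w : X → ℕ) (n m : ℕ) (f : FreeAlgebra k X)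
    (hf : f ∈ wdeg k w m) : proj k w n f = if m = n then f else 0 := by
  rw [wdeg_eq] at hf
  induction hf using span_induction with
  | mem x h =>
    obtain ⟨l, hl, rfl⟩ := h
    rw [proj_mon, hl]
  | zero => simp
  | add x y _ _ hx hy => rw [map_add, hx, hy]; split_ifs <;> simp
  | smul a x _ hx => rw [map_smul, hx]; split_ifs <;> simp

lemma proj_homog {k : Type} [Field k] {X : Type} {w : X → ℕ} {I : Submodule k (FreeAlgebra k X)}
    (hI : IsHomogSpan (wdeg k w) I) (n : ℕ) {f : FreeAlgebra k X} (hf : f ∈ I) :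
    proj k w n f ∈ I := by
  suffices h : I ≤ I.comap (proj k w n) from h hf
  refine le_trans hI (span_le.2 ?_)
  rintro x ⟨h, m, hm⟩
  change proj k w n x ∈ I
  rw [proj_wdeg k w n m x hm]
  split_ifs
  · exact h
  · exact zero_mem _

/-- A family of words whose monomials form a graded basis modulo `I`. -/
structure GB {k : Type} [Field k] {X : Type} (w : X → ℕ) (I : Submodule k (FreeAlgebra k X))
    {S : Type} (u : S → List X) : Prop where
  indep : LinearIndependent k (fun s => I.mkQ (mon k (u s)))
  span : ∀ l, mon k l ∈ I ⊔ Submodule.span k (mon k '' {l' | wt w l' = wt w l ∧ l' ∈ Set.range u})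

lemma GB.top {k : Type} [Field k] {X : Type} {w : X → ℕ} {I : Submodule k (FreeAlgebra k X)}
    {S : Type} {u : S → List X} (h : GB w I u) :
    I ⊔ Submodule.span k (Set.range fun s => mon k (u s)) = ⊤ := by
  rw [eq_top_iff, ← span_mon, span_le]
  rintro _ ⟨l, rfl⟩
  refine sup_le_sup_left (span_mono ?_) I (h.span l)
  rintro _ ⟨l', ⟨-, s, rfl⟩, rfl⟩
  exact ⟨s, rfl⟩

lemma GB.top' {k : Type} [Field k] {X : Type} {w : X → ℕ} {I : Submodule k (FreeAlgebra k X)}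
    {S : Type} {u : S → List X} (h : GB w I u) :
    ⊤ ≤ Submodule.span k (Set.range fun s => I.mkQ (mon k (u s))) := by
  have := congrArg (Submodule.map I.mkQ) h.top
  rw [Submodule.map_sup, Submodule.map_span, Submodule.map_top, range_mkQ, mkQ_map_self,
    bot_sup_eq, ← Set.range_comp] at this
  exact this.ge

lemma exists_GB {k : Type} [Field k] {X : Type} {w : X → ℕ} {I : Submodule k (FreeAlgebra k X)}
    (h2 : IsTwoSidedSub I) (hI : IsHomogSpan (wdeg k w) I) (hne : I ≠ ⊤) :
    ∃ (a : Type) (u : Option a → List X), u none = [] ∧ GB w I u := by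
  have h1 : I.mkQ 1 ≠ 0 := by
    intro h
    rw [mkQ_apply, Quotient.mk_eq_zero] at h
    apply hne
    rw [eq_top_iff]
    rintro f -
    simpa using (h2 f 1 h).1
  have hs : LinearIndepOn k (fun l => I.mkQ (mon k l)) ({[]} : Set (List X)) := by
    rw [linearIndepOn_singleton_iff, mon_nil]
    exact h1
  obtain ⟨b, -, hb, hspan, hli⟩ := exists_linearIndepOn_extension hs (Set.subset_univ _)
  have hb' : ([] : List X) ∈ b := hb rfl
  classical
  let E := Equiv.optionSubtypeNe (⟨[], hb'⟩ : b)
  refine ⟨_, fun o => (E o : List X), by simp [E], ?_, ?_⟩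
  · exact hli.linearIndependent.comp E E.injective
  · intro l
    have h3 : mon k l ∈ I ⊔ span k (mon k '' b) := by
      have := hspan ⟨l, trivial, rfl⟩
      rw [← Set.image_image (fun x => I.mkQ x) (mon k) b] at this
      change I.mkQ (mon k l) ∈ span k (I.mkQ '' _) at this
      rw [← Submodule.map_span, ← Submodule.mem_comap, comap_map_mkQ] at this
      exact this
    have h4 : proj k w (wt w l) (mon k l) = mon k l := by simp [proj_mon]
    rw [← h4]
    refine tr (proj k w (wt w l)) h3 ?_
    refine sup_le (fun f hf => mem_sup_left (proj_homog hI _ hf)) (span_le.2 ?_)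
    rintro _ ⟨l', hl', rfl⟩
    rw [SetLike.mem_coe, Submodule.mem_comap]
    rw [proj_mon]
    split_ifs with h5
    · exact mem_sup_right (subset_span ⟨l', ⟨h5, E.symm ⟨l', hl'⟩, by simp⟩, rfl⟩)
    · exact zero_mem _

lemma finite_wt {X : Type} {w : X → ℕ} (hw : ∀ x, 1 ≤ w x) (hf : ∀ n, {x | w x = n}.Finite)
    (n : ℕ) : {l | wt w l = n}.Finite := by
  induction n using Nat.strong_induction_on with
  | _ n ih =>
    have : {l | wt w l = n} ⊆ {[]} ∪ ⋃ m ∈ Set.Iio n, ⋃ x ∈ {x | w x = n - m},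
        (fun l => x :: l) '' {l | wt w l = m} := by
      rintro (_ | ⟨x, l⟩) h
      · simp
      · right
        have h' : wt w (x :: l) = n := h
        rw [wt_cons] at h'
        have := hw x
        simp only [Set.mem_iUnion]
        refine ⟨wt w l, Set.mem_Iio.2 (by omega), x, ?_, l, rfl, rfl⟩
        change w x = n - wt w l
        omega
    refine Set.Finite.subset ?_ this
    refine (Set.finite_singleton _).union ((Set.finite_Iio n).biUnion fun m hm => ?_)
    exact (hf _).biUnion fun x _ => (ih m hm).image _

/-- The weight `n` part of the index set of a graded basis. -/
lemma GB.dim {k : Type} [Field k] {X : Type} {w : X → ℕ} {I : Submodule k (FreeAlgebra k X)}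
    {S : Type} {u : S → List X} (h : GB w I u)
    (hw : ∀ x, 1 ≤ w x) (hf : ∀ n, {x | w x = n}.Finite) (n : ℕ) :
    Finite {s // wt w (u s) = n} ∧
      quotDim k (wdeg k w) I n = Nat.card {s // wt w (u s) = n} := by
  have hfd : Module.Finite k (wdeg k w n) := by
    rw [wdeg_eq]
    exact Module.Finite.span_of_finite k ((finite_wt hw hf n).image _)
  let j : (wdeg k w n ⧸ I.comap (wdeg k w n).subtype) →ₗ[k] (FreeAlgebra k X ⧸ I) :=
    Submodule.mapQ _ I (wdeg k w n).subtype le_rfl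
  have hj : Function.Injective j := by
    rw [← LinearMap.ker_eq_bot, Submodule.ker_mapQ, mkQ_map_self]
  let v : {s // wt w (u s) = n} → (wdeg k w n ⧸ I.comap (wdeg k w n).subtype) := fun s =>
    Submodule.mkQ _ ⟨mon k (u s), by rw [wdeg_eq]; exact subset_span ⟨_, s.2, rfl⟩⟩
  have hjv : ∀ s, j (v s) = I.mkQ (mon k (u s)) := fun s => rfl
  have hv : LinearIndependent k v := by
    apply LinearIndependent.of_comp j
    exact h.indep.comp (fun s : {s // wt w (u s) = n} => (s : S)) Subtype.val_injective
  have hspan : ⊤ ≤ Submodule.span k (Set.range v) := by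
    rintro q -
    obtain ⟨⟨x, hx⟩, rfl⟩ := Submodule.mkQ_surjective _ q
    have h1 : x ∈ I ⊔ Submodule.span k (mon k '' {l' | wt w l' = n ∧ l' ∈ Set.range u}) := by
      rw [wdeg_eq] at hx
      refine (span_le.2 ?_) hx
      rintro _ ⟨l, hl, rfl⟩
      have hl' : wt w l = n := hl
      have := h.span l
      rwa [hl'] at this
    have h2 : j (Submodule.mkQ _ ⟨x, hx⟩) ∈ Submodule.map j (Submodule.span k (Set.range v)) := by
      change I.mkQ x ∈ _
      have h3 := Submodule.mem_map_of_mem (f := I.mkQ) h1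
      rw [Submodule.map_sup, mkQ_map_self, bot_sup_eq, Submodule.map_span] at h3
      rw [Submodule.map_span]
      refine span_mono ?_ h3
      rintro _ ⟨_, ⟨l, ⟨hl, s, rfl⟩, rfl⟩, rfl⟩
      exact ⟨v ⟨s, hl⟩, ⟨_, rfl⟩, rfl⟩
    obtain ⟨y, hy, hy'⟩ := h2
    rwa [← hj hy']
  let b := Module.Basis.mk hv hspan
  exact ⟨Module.Finite.finite_basis b, Module.finrank_eq_nat_card_basis b⟩

/-- Coordinates with respect to a graded basis. -/
def GB.coord {k : Type} [Field k] {X : Type} {w : X → ℕ} {I : Submodule k (FreeAlgebra k X)}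
    {S : Type} {u : S → List X} (h : GB w I u) : FreeAlgebra k X →ₗ[k] (S →₀ k) :=
  (Module.Basis.mk h.indep h.top').repr.toLinearMap ∘ₗ I.mkQ

lemma GB.coord_mon {k : Type} [Field k] {X : Type} {w : X → ℕ}
    {I : Submodule k (FreeAlgebra k X)}
    {S : Type} {u : S → List X} (h : GB w I u) (s : S) :
    h.coord (mon k (u s)) = Finsupp.single s 1 := by
  have : I.mkQ (mon k (u s)) = Module.Basis.mk h.indep h.top' s := by simp
  simp only [GB.coord, LinearMap.comp_apply, this]
  exact Module.Basis.repr_self _ s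

lemma GB.coord_mem {k : Type} [Field k] {X : Type} {w : X → ℕ}
    {I : Submodule k (FreeAlgebra k X)}
    {S : Type} {u : S → List X} (h : GB w I u) {f : FreeAlgebra k X} (hf : f ∈ I) :
    h.coord f = 0 := by
  have : I.mkQ f = 0 := by simpa using hf
  simp only [GB.coord, LinearMap.comp_apply, this, map_zero]

/-- Left multiplication by a generator, acting on `W →₀ k` through `S × Q ≃ W`. -/
def GB.gen {k : Type} [Field k] {X : Type} {w : X → ℕ} {I : Submodule k (FreeAlgebra k X)}
    {S : Type} {u : S → List X} (h : GB w I u) {Q W : Type} (E : S × Q ≃ W) (x : X) :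
    Module.End k (W →₀ k) :=
  Finsupp.linearCombination k (fun z =>
    Finsupp.lmapDomain k k (fun s => E (s, (E.symm z).2))
      (h.coord (FreeAlgebra.ι k x * mon k (u (E.symm z).1))))

/-- The action of the free algebra on `W →₀ k`. -/
def GB.act {k : Type} [Field k] {X : Type} {w : X → ℕ} {I : Submodule k (FreeAlgebra k X)}
    {S : Type} {u : S → List X} (h : GB w I u) {Q W : Type} (E : S × Q ≃ W) :
    FreeAlgebra k X →ₐ[k] Module.End k (W →₀ k) :=
  FreeAlgebra.lift k (h.gen E)

lemma GB.act_apply {k : Type} [Field k] {X : Type} {w : X → ℕ}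
    {I : Submodule k (FreeAlgebra k X)} (h2 : IsTwoSidedSub I)
    {S : Type} {u : S → List X} (h : GB w I u) {Q W : Type} (E : S × Q ≃ W) (q : Q)
    (f g : FreeAlgebra k X) :
    h.act E f (Finsupp.lmapDomain k k (fun s => E (s, q)) (h.coord g)) =
      Finsupp.lmapDomain k k (fun s => E (s, q)) (h.coord (f * g)) := by
  induction f using FreeAlgebra.induction generalizing g with
  | grade0 r => simp [Algebra.algebraMap_eq_smul_one]
  | grade1 x =>
    let L1 : FreeAlgebra k X →ₗ[k] (W →₀ k) := h.act E (FreeAlgebra.ι k x) ∘ₗ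
      Finsupp.lmapDomain k k (fun s => E (s, q)) ∘ₗ h.coord
    let L2 : FreeAlgebra k X →ₗ[k] (W →₀ k) :=
      Finsupp.lmapDomain k k (fun s => E (s, q)) ∘ₗ h.coord ∘ₗ
        LinearMap.mulLeft k (FreeAlgebra.ι k x)
    have : (⊤ : Submodule k (FreeAlgebra k X)) ≤ LinearMap.eqLocus L1 L2 := by
      rw [← h.top]
      refine sup_le ?_ (span_le.2 ?_)
      · intro f hf
        rw [LinearMap.mem_eqLocus]
        simp only [L1, L2, LinearMap.comp_apply, h.coord_mem hf, LinearMap.mulLeft_apply,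
          h.coord_mem (h2 _ f hf).1, map_zero]
      · rintro _ ⟨s, rfl⟩
        change L1 _ = L2 _
        simp only [L1, L2, LinearMap.comp_apply, h.coord_mon, LinearMap.mulLeft_apply]
        simp [GB.act, GB.gen]
    exact this (show g ∈ ⊤ from trivial)
  | mul a b ha hb => rw [map_mul, Module.End.mul_apply, hb, ha, mul_assoc]
  | add a b ha hb => simp only [map_add, add_mul, LinearMap.add_apply, ha, hb]

lemma GB.act_mem {k : Type} [Field k] {X : Type} {w : X → ℕ}
    {I : Submodule k (FreeAlgebra k X)} (h2 : IsTwoSidedSub I)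
    {S : Type} {u : S → List X} (h : GB w I u) {Q W : Type} (E : S × Q ≃ W)
    {f : FreeAlgebra k X} (hf : f ∈ I) : h.act E f = 0 := by
  refine Finsupp.lhom_ext' fun z => LinearMap.ext_ring ?_
  obtain ⟨⟨s, q⟩, rfl⟩ := E.surjective z
  have := h.act_apply h2 E q f (mon k (u s))
  rw [h.coord_mon, h.coord_mem (h2 _ f hf).2] at this
  simpa using this

lemma GB.act_single {k : Type} [Field k] {X : Type} {w : X → ℕ}
    {I : Submodule k (FreeAlgebra k X)} (h2 : IsTwoSidedSub I)
    {S : Type} {u : S → List X} (h : GB w I u) {Q W : Type} (E : S × Q ≃ W)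
    (s0 s : S) (hs0 : u s0 = []) (q : Q) :
    h.act E (mon k (u s)) (Finsupp.single (E (s0, q)) 1) = Finsupp.single (E (s, q)) 1 := by
  have := h.act_apply h2 E q (mon k (u s)) (mon k (u s0))
  rw [h.coord_mon, hs0, mon_nil, mul_one, h.coord_mon] at this
  simpa using this

lemma GB.span_step {k : Type} [Field k] {X Z : Type} {w : X → ℕ}
    {I : Submodule k (FreeAlgebra k X)}
    {S : Type} {u : S → List X} (h : GB w I u) {Q W : Type} (E : S × Q ≃ W)
    (wZ : Z → ℕ) (i : X → Z) (hi : ∀ x, wZ (i x) = w x)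
    (J : Submodule k (FreeAlgebra k Z)) (hJ : IsTwoSidedSub J)
    (hIJ : ∀ f ∈ I, FreeAlgebra.lift k (fun x => FreeAlgebra.ι k (i x)) f ∈ J)
    (word : W → List Z) (wordQ : Q → List Z)
    (hword : ∀ s q, word (E (s, q)) = (u s).map i ++ wordQ q)
    (x : X) (l : List Z)
    (hl : mon k l ∈ J ⊔ Submodule.span k (mon k '' {l' | wt wZ l' = wt wZ l ∧ l' ∈ Set.range word})) :
    mon k (i x :: l) ∈ J ⊔ Submodule.span k
      (mon k '' {l' | wt wZ l' = wt wZ (i x :: l) ∧ l' ∈ Set.range word}) := by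
  have hwt : ∀ l : List X, wt wZ (l.map i) = wt w l := by
    intro l
    simp [wt, Function.comp_def, hi]
  have hmon : ∀ l : List X, FreeAlgebra.lift k (fun x => FreeAlgebra.ι k (i x)) (mon k l) =
      mon k (l.map i) := by
    intro l
    simp [mon, map_list_prod, Function.comp_def]
  rw [mon_cons]
  refine tr (LinearMap.mulLeft k (FreeAlgebra.ι k (i x))) hl (sup_le ?_ (span_le.2 ?_))
  · intro f hf
    exact mem_sup_left (hJ _ f hf).1
  rintro _ ⟨_, ⟨hl', z, rfl⟩, rfl⟩
  obtain ⟨⟨s, q⟩, rfl⟩ := E.surjective z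
  rw [hword] at hl' ⊢
  have h1 := h.span (x :: u s)
  let M : FreeAlgebra k X →ₗ[k] FreeAlgebra k Z := LinearMap.mulRight k (mon k (wordQ q)) ∘ₗ
    (FreeAlgebra.lift k (fun x => FreeAlgebra.ι k (i x))).toLinearMap
  have hM : M (mon k (x :: u s)) = FreeAlgebra.ι k (i x) * mon k ((u s).map i ++ wordQ q) := by
    simp only [M, LinearMap.comp_apply, AlgHom.toLinearMap_apply, hmon, LinearMap.mulRight_apply,
      List.map_cons]
    rw [mon_cons, mon_append, mul_assoc]
  rw [SetLike.mem_coe, Submodule.mem_comap, LinearMap.mulLeft_apply, ← hM]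
  refine tr M h1 (sup_le ?_ (span_le.2 ?_))
  · intro f hf
    exact mem_sup_left (hJ _ _ (hIJ f hf)).2
  rintro _ ⟨_, ⟨hs', s', rfl⟩, rfl⟩
  refine mem_sup_right (subset_span ⟨word (E (s', q)), ⟨?_, ⟨_, rfl⟩⟩, ?_⟩)
  · rw [hword, wt_append, hwt, hs', wt_cons, wt_cons, ← hl', wt_append, hwt, hi]
    ring
  · simp only [M, LinearMap.comp_apply, AlgHom.toLinearMap_apply, hmon, LinearMap.mulRight_apply,
      hword, mon_append]

/-- Generating function of a weighted type. -/
def gf {T : Type} (d : T → ℕ) : PowerSeries ℚ :=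
  PowerSeries.mk fun n => (Nat.card {t // d t = n} : ℚ)

lemma gf_mul {S Q : Type} (d : S → ℕ) (e : Q → ℕ) (hd : ∀ n, Finite {s // d s = n})
    (he : ∀ n, Finite {s // e s = n}) :
    gf (fun p : S × Q => d p.1 + e p.2) = gf d * gf e := by
  ext n
  rw [PowerSeries.coeff_mul]
  simp only [gf, PowerSeries.coeff_mk]
  let F : {p : S × Q // d p.1 + e p.2 = n} ≃
      Σ ij : Finset.HasAntidiagonal.antidiagonal n, {s // d s = ij.1.1} × {s // e s = ij.1.2} :=
    { toFun := fun p => ⟨⟨(d p.1.1, e p.1.2), by simpa using p.2⟩, ⟨p.1.1, rfl⟩, ⟨p.1.2, rfl⟩⟩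
      invFun := fun z => ⟨(z.2.1.1, z.2.2.1), by
        rw [z.2.1.2, z.2.2.2]; exact Finset.HasAntidiagonal.mem_antidiagonal.1 z.1.2⟩
      left_inv := fun p => rfl
      right_inv := by
        rintro ⟨⟨⟨i, j⟩, h⟩, ⟨s, hs⟩, ⟨t, ht⟩⟩
        simp only at hs ht
        subst hs ht
        rfl }
  rw [Nat.card_congr F, Nat.card_sigma]
  simp only [Nat.card_prod]
  rw [Finset.sum_coe_sort (Finset.HasAntidiagonal.antidiagonal n)
    (fun ij => Nat.card {s // d s = ij.1} * Nat.card {s // e s = ij.2})]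
  push_cast
  rfl

lemma gf_congr {S T : Type} (d : S → ℕ) (e : T → ℕ) (E : S ≃ T) (h : ∀ s, e (E s) = d s) :
    gf d = gf e := by
  ext n
  simp only [gf, PowerSeries.coeff_mk]
  congr 1
  exact Nat.card_congr (E.subtypeEquiv fun s => by rw [h])

/-- Two subsets covering everything and meeting in one point of weight zero. -/
lemma gf_add {W : Type} (d : W → ℕ) (hd : ∀ n, Finite {s // d s = n}) (p q : W → Prop) (w0 : W)
    (h0 : d w0 = 0) (hpq : ∀ z, p z ∨ q z) (hpq' : ∀ z, p z ∧ q z ↔ z = w0) :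
    gf (fun z : {z // p z} => d z) + gf (fun z : {z // q z} => d z) = gf d + 1 := by
  ext n
  simp only [gf, map_add, PowerSeries.coeff_mk, PowerSeries.coeff_one]
  have e : ∀ r : W → Prop, Nat.card {t : {z // r z} // d t = n} =
      ({z | r z ∧ d z = n} : Set W).ncard := fun r =>
    Nat.card_congr (Equiv.subtypeSubtypeEquivSubtypeInter r (fun z => d z = n))
  have fin : ({z | d z = n} : Set W).Finite := hd n
  have := Set.ncard_union_add_ncard_inter ({z | p z ∧ d z = n} : Set W) {z | q z ∧ d z = n}
    (fin.subset fun z hz => hz.2) (fin.subset fun z hz => hz.2)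
  have h1 : ({z | p z ∧ d z = n} : Set W) ∪ {z | q z ∧ d z = n} = {z | d z = n} := by
    ext z
    have := hpq z
    simp only [Set.mem_union, Set.mem_ofPred_eq]
    tauto
  have h2 : ({z | p z ∧ d z = n} : Set W) ∩ {z | q z ∧ d z = n} = {z | z = w0 ∧ n = 0} := by
    ext z
    have := hpq' z
    simp only [Set.mem_inter_iff, Set.mem_ofPred_eq]
    constructor
    · rintro ⟨⟨a, b⟩, c, -⟩
      have hz := this.1 ⟨a, c⟩
      subst hz
      exact ⟨rfl, by omega⟩
    · rintro ⟨rfl, rfl⟩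
      have h6 := hpq' z |>.2 rfl
      exact ⟨⟨h6.1, h0⟩, h6.2, h0⟩
  have h3 : ({z | z = w0 ∧ n = 0} : Set W).ncard = if n = 0 then 1 else 0 := by
    split_ifs with hn
    · simp [hn]
    · simp [hn]
  rw [h1, h2, h3] at this
  rw [e, e]
  have h4 : Nat.card {t // d t = n} = ({z | d z = n} : Set W).ncard := rfl
  rw [h4]
  have h5 := congrArg (Nat.cast : ℕ → ℚ) this
  push_cast at h5
  exact h5.symm

/-- Alternating words. -/
def Alt (a b : Type) : Type :=
  {l : List (a ⊕ b) // l.IsChain (fun p q => p.isLeft ≠ q.isLeft)}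

/-- Alternating words not starting with a left letter. -/
def Alt.NL {a b : Type} (z : Alt a b) : Prop := ∀ p ∈ z.1.head?, p.isLeft = false

/-- Alternating words not starting with a right letter. -/
def Alt.NR {a b : Type} (z : Alt a b) : Prop := ∀ p ∈ z.1.head?, p.isLeft = true

/-- Prepend a possibly trivial left letter. -/
def Alt.consL {a b : Type} : Option a × {z : Alt a b // z.NL} → Alt a b
  | (none, z) => z.1
  | (some x, z) => ⟨Sum.inl x :: z.1.1, by
      rw [List.isChain_cons]
      exact ⟨fun y hy => by simp [z.2 y hy], z.1.2⟩⟩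

/-- Prepend a possibly trivial right letter. -/
def Alt.consR {a b : Type} : Option b × {z : Alt a b // z.NR} → Alt a b
  | (none, z) => z.1
  | (some x, z) => ⟨Sum.inr x :: z.1.1, by
      rw [List.isChain_cons]
      exact ⟨fun y hy => by simp [z.2 y hy], z.1.2⟩⟩

lemma Alt.consL_bij {a b : Type} : Function.Bijective (Alt.consL (a := a) (b := b)) := by
  constructor
  · rintro ⟨_ | x, ⟨⟨l, hl⟩, h⟩⟩ ⟨_ | y, ⟨⟨l', hl'⟩, h'⟩⟩ he
    · have := congrArg Subtype.val he
      simp only [consL] at this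
      subst this
      rfl
    · have := congrArg Subtype.val he
      simp only [consL] at this
      subst this
      have := h _ rfl
      simp at this
    · have := congrArg Subtype.val he
      simp only [consL] at this
      subst this
      have := h' _ rfl
      simp at this
    · have := congrArg Subtype.val he
      simp only [consL, List.cons.injEq, Sum.inl.injEq] at this
      obtain ⟨rfl, rfl⟩ := this
      rfl
  · rintro ⟨_ | ⟨x | y, l⟩, h⟩
    · exact ⟨(none, ⟨⟨[], h⟩, by simp [NL]⟩), rfl⟩
    · have h' := List.isChain_cons.1 h
      exact ⟨(some x, ⟨⟨l, h'.2⟩, fun p hp => by simpa using h'.1 p hp⟩), rfl⟩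
    · exact ⟨(none, ⟨⟨Sum.inr y :: l, h⟩, by simp [NL]⟩), rfl⟩

lemma Alt.consR_bij {a b : Type} : Function.Bijective (Alt.consR (a := a) (b := b)) := by
  constructor
  · rintro ⟨_ | x, ⟨⟨l, hl⟩, h⟩⟩ ⟨_ | y, ⟨⟨l', hl'⟩, h'⟩⟩ he
    · have := congrArg Subtype.val he
      simp only [consR] at this
      subst this
      rfl
    · have := congrArg Subtype.val he
      simp only [consR] at this
      subst this
      have := h _ rfl
      simp at this
    · have := congrArg Subtype.val he
      simp only [consR] at this
      subst this
      have := h' _ rfl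
      simp at this
    · have := congrArg Subtype.val he
      simp only [consR, List.cons.injEq, Sum.inr.injEq] at this
      obtain ⟨rfl, rfl⟩ := this
      rfl
  · rintro ⟨_ | ⟨x | y, l⟩, h⟩
    · exact ⟨(none, ⟨⟨[], h⟩, by simp [NR]⟩), rfl⟩
    · exact ⟨(none, ⟨⟨Sum.inl x :: l, h⟩, by simp [NR]⟩), rfl⟩
    · have h' := List.isChain_cons.1 h
      exact ⟨(some y, ⟨⟨l, h'.2⟩, fun p hp => by simpa using h'.1 p hp⟩), rfl⟩

/-- Left decomposition. -/
def Alt.EL (a b : Type) : Option a × {z : Alt a b // z.NL} ≃ Alt a b :=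
  Equiv.ofBijective _ Alt.consL_bij

/-- Right decomposition. -/
def Alt.ER (a b : Type) : Option b × {z : Alt a b // z.NR} ≃ Alt a b :=
  Equiv.ofBijective _ Alt.consR_bij

/-- The empty alternating word. -/
def Alt.nil (a b : Type) : Alt a b := ⟨[], List.IsChain.nil⟩

/-- The word in the generators attached to an alternating word. -/
def Alt.word {a b X Y : Type} (u : Option a → List X) (v : Option b → List Y) (z : Alt a b) :
    List (X ⊕ Y) :=
  z.1.flatMap (Sum.elim (fun x => (u (some x)).map Sum.inl) (fun y => (v (some y)).map Sum.inr))

lemma Alt.word_EL {a b X Y : Type} (u : Option a → List X) (v : Option b → List Y)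
    (hu : u none = []) (s : Option a) (q : {z : Alt a b // z.NL}) :
    (Alt.EL a b (s, q)).word u v = (u s).map Sum.inl ++ q.1.word u v := by
  cases s with
  | none => rw [hu]; rfl
  | some x => rfl

lemma Alt.word_ER {a b X Y : Type} (u : Option a → List X) (v : Option b → List Y)
    (hv : v none = []) (s : Option b) (q : {z : Alt a b // z.NR}) :
    (Alt.ER a b (s, q)).word u v = (v s).map Sum.inr ++ q.1.word u v := by
  cases s with
  | none => rw [hv]; rfl
  | some x => rfl

lemma idealGen_twoSided (k : Type) [Field k] {A : Type} [Ring A] [Algebra k A] (S : Set A) :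
    IsTwoSidedSub (idealGen k S) := by
  intro c x hx
  constructor
  · refine tr (LinearMap.mulLeft k c) hx (span_le.2 ?_)
    rintro _ ⟨p, q, s, hs, rfl⟩
    exact subset_span ⟨c * p, q, s, hs, by simp [mul_assoc]⟩
  · refine tr (LinearMap.mulRight k c) hx (span_le.2 ?_)
    rintro _ ⟨p, q, s, hs, rfl⟩
    exact subset_span ⟨p, q * c, s, hs, by simp [mul_assoc]⟩

/-- The graded basis of the free product. -/
lemma GB.free {k X Y : Type} [Field k] {wX : X → ℕ} {wY : Y → ℕ}
    {IA : Submodule k (FreeAlgebra k X)} (hIA2 : IsTwoSidedSub IA)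
    {IB : Submodule k (FreeAlgebra k Y)} (hIB2 : IsTwoSidedSub IB)
    {a b : Type} {u : Option a → List X} {v : Option b → List Y}
    (hu : u none = []) (hv : v none = []) (hA : GB wX IA u) (hB : GB wY IB v) :
    GB (Sum.elim wX wY) (idealGen k
      ((FreeAlgebra.lift k fun x : X => FreeAlgebra.ι k (Sum.inl x : X ⊕ Y)) '' IA ∪
       (FreeAlgebra.lift k fun y : Y => FreeAlgebra.ι k (Sum.inr y : X ⊕ Y)) '' IB))
      (Alt.word u v : Alt a b → List (X ⊕ Y)) := by
  set J := idealGen k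
      ((FreeAlgebra.lift k fun x : X => FreeAlgebra.ι k (Sum.inl x : X ⊕ Y)) '' IA ∪
       (FreeAlgebra.lift k fun y : Y => FreeAlgebra.ι k (Sum.inr y : X ⊕ Y)) '' IB) with hJ
  constructor
  · let Φ : FreeAlgebra k (X ⊕ Y) →ₐ[k] Module.End k (Alt a b →₀ k) :=
      FreeAlgebra.lift k (Sum.elim (hA.gen (Alt.EL a b)) (hB.gen (Alt.ER a b)))
    have hΦA : ∀ f, Φ (FreeAlgebra.lift k (fun x : X => FreeAlgebra.ι k (Sum.inl x : X ⊕ Y)) f)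
        = hA.act (Alt.EL a b) f := by
      intro f
      rw [← AlgHom.comp_apply]
      congr 1
      ext x : 2
      simp [Φ, GB.act]
    have hΦB : ∀ f, Φ (FreeAlgebra.lift k (fun x : Y => FreeAlgebra.ι k (Sum.inr x : X ⊕ Y)) f)
        = hB.act (Alt.ER a b) f := by
      intro f
      rw [← AlgHom.comp_apply]
      congr 1
      ext x : 2
      simp [Φ, GB.act]
    let L : FreeAlgebra k (X ⊕ Y) →ₗ[k] (Alt a b →₀ k) :=
      LinearMap.applyₗ (Finsupp.single (Alt.nil a b) 1) ∘ₗ Φ.toLinearMap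
    have hL : ∀ f, L f = Φ f (Finsupp.single (Alt.nil a b) 1) := fun f => rfl
    have hLJ : J ≤ LinearMap.ker L := by
      refine span_le.2 ?_
      rintro _ ⟨p, q, s, hs, rfl⟩
      have : Φ s = 0 := by
        rcases hs with ⟨f, hf, rfl⟩ | ⟨f, hf, rfl⟩
        · rw [hΦA, hA.act_mem hIA2 _ hf]
        · rw [hΦB, hB.act_mem hIB2 _ hf]
      change L _ = 0
      rw [hL, map_mul, map_mul, this]
      simp
    have hmonA : ∀ l : List X, mon k (l.map (Sum.inl : X → X ⊕ Y)) =
        FreeAlgebra.lift k (fun x => FreeAlgebra.ι k (Sum.inl x)) (mon k l) := by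
      intro l
      simp [mon, map_list_prod, Function.comp_def]
    have hmonB : ∀ l : List Y, mon k (l.map (Sum.inr : Y → X ⊕ Y)) =
        FreeAlgebra.lift k (fun x => FreeAlgebra.ι k (Sum.inr x)) (mon k l) := by
      intro l
      simp [mon, map_list_prod, Function.comp_def]
    have hLw : ∀ (l : List (a ⊕ b)) (h : _), L (mon k (Alt.word u v ⟨l, h⟩)) =
        Finsupp.single (⟨l, h⟩ : Alt a b) 1 := by
      intro l
      induction l with
      | nil =>
        intro h
        rw [show Alt.word u v ⟨[], h⟩ = [] from rfl, mon_nil, hL, map_one]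
        rfl
      | cons p l ih =>
        intro h
        have h' := List.isChain_cons.1 h
        rcases p with x | y
        · let q : {z : Alt a b // z.NL} := ⟨⟨l, h'.2⟩, fun p hp => by simpa using h'.1 p hp⟩
          have e : (⟨Sum.inl x :: l, h⟩ : Alt a b) = Alt.EL a b (some x, q) := rfl
          rw [e, Alt.word_EL u v hu, mon_append, hL, map_mul, Module.End.mul_apply, ← hL, ih,
            hmonA, hΦA]
          exact hA.act_single hIA2 (Alt.EL a b) none (some x) hu q
        · let q : {z : Alt a b // z.NR} := ⟨⟨l, h'.2⟩, fun p hp => by simpa using h'.1 p hp⟩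
          have e : (⟨Sum.inr y :: l, h⟩ : Alt a b) = Alt.ER a b (some y, q) := rfl
          rw [e, Alt.word_ER u v hv, mon_append, hL, map_mul, Module.End.mul_apply, ← hL, ih,
            hmonB, hΦB]
          exact hB.act_single hIB2 (Alt.ER a b) none (some y) hv q
    apply LinearIndependent.of_comp (J.liftQ L hLJ)
    have : (J.liftQ L hLJ) ∘ (fun s : Alt a b => J.mkQ (mon k (Alt.word u v s))) =
        fun s => Finsupp.single s 1 := by
      funext s
      exact hLw s.1 s.2
    rw [this]
    exact Finsupp.linearIndependent_single_one k _
  · intro l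
    induction l with
    | nil =>
      exact mem_sup_right (subset_span ⟨[], ⟨rfl, Alt.nil a b, rfl⟩, rfl⟩)
    | cons p l ih =>
      rcases p with x | y
      · refine hA.span_step (Alt.EL a b) (Sum.elim wX wY) Sum.inl (fun _ => rfl) J
          (idealGen_twoSided k _) ?_ (Alt.word u v) (fun q => q.1.word u v)
          (Alt.word_EL u v hu) x l ih
        intro f hf
        exact subset_span ⟨1, 1, _, Or.inl ⟨f, hf, rfl⟩, by simp⟩
      · refine hB.span_step (Alt.ER a b) (Sum.elim wX wY) Sum.inr (fun _ => rfl) J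
          (idealGen_twoSided k _) ?_ (Alt.word u v) (fun q => q.1.word u v)
          (Alt.word_ER u v hv) y l ih
        intro f hf
        exact subset_span ⟨1, 1, _, Or.inr ⟨f, hf, rfl⟩, by simp⟩

lemma wt_map {X Z : Type} (w : X → ℕ) (wZ : Z → ℕ) (i : X → Z) (hi : ∀ x, wZ (i x) = w x)
    (l : List X) : wt wZ (l.map i) = wt w l := by
  simp [wt, Function.comp_def, hi]

lemma gf_ne {T : Type} (d : T → ℕ) (hd : ∀ n, Finite {t // d t = n}) (t : T) (ht : d t = 0) :
    PowerSeries.constantCoeff (gf d) ≠ 0 := by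
  rw [← PowerSeries.coeff_zero_eq_constantCoeff_apply]
  simp only [gf, PowerSeries.coeff_mk]
  have := hd 0
  have : Nonempty {t // d t = 0} := ⟨⟨t, ht⟩⟩
  exact_mod_cast Nat.card_pos.ne'

end FreeProd

end
/-- **Hilbert series of a free product** (used in Section 5): for connected graded
algebras `A = k⟨X⟩/I_A`, `B = k⟨Y⟩/I_B` and their free product
`C = A*B = k⟨X ⊔ Y⟩/J`, one has `C(t)⁻¹ = A(t)⁻¹ + B(t)⁻¹ - 1`. -/
theorem stmt18 {k X Y : Type} [Field k]
    (wX : X → ℕ) (wY : Y → ℕ)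
    (hwX : ∀ x, 1 ≤ wX x) (hwY : ∀ y, 1 ≤ wY y)
    (hfX : ∀ n, {x | wX x = n}.Finite) (hfY : ∀ n, {y | wY y = n}.Finite)
    (IA : Submodule k (FreeAlgebra k X))
    (hIA2 : IsTwoSidedSub IA) (hIAhom : IsHomogSpan (wdeg k wX) IA) (hIAne : IA ≠ ⊤)
    (IB : Submodule k (FreeAlgebra k Y))
    (hIB2 : IsTwoSidedSub IB) (hIBhom : IsHomogSpan (wdeg k wY) IB) (hIBne : IB ≠ ⊤)
    (J : Submodule k (FreeAlgebra k (X ⊕ Y)))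
    (hJ : J = idealGen k
      ((FreeAlgebra.lift k fun x : X => FreeAlgebra.ι k (Sum.inl x : X ⊕ Y)) '' IA ∪
       (FreeAlgebra.lift k fun y : Y => FreeAlgebra.ι k (Sum.inr y : X ⊕ Y)) '' IB)) :
    (PowerSeries.mk fun n => (quotDim k (wdeg k (Sum.elim wX wY)) J n : ℚ))⁻¹ =
      (PowerSeries.mk fun n => (quotDim k (wdeg k wX) IA n : ℚ))⁻¹ +
      (PowerSeries.mk fun n => (quotDim k (wdeg k wY) IB n : ℚ))⁻¹ - 1 := by
  classical
  subst hJ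
  obtain ⟨a, u, hu, hA⟩ := FreeProd.exists_GB hIA2 hIAhom hIAne
  obtain ⟨b, v, hv, hB⟩ := FreeProd.exists_GB hIB2 hIBhom hIBne
  have hC := FreeProd.GB.free hIA2 hIB2 hu hv hA hB
  have hw : ∀ z, 1 ≤ Sum.elim wX wY z := by
    rintro (x | y)
    · exact hwX x
    · exact hwY y
  have hf : ∀ n, {z | Sum.elim wX wY z = n}.Finite := by
    intro n
    refine (((hfX n).image Sum.inl).union ((hfY n).image Sum.inr)).subset ?_
    rintro (x | y) h
    · exact Or.inl ⟨x, h, rfl⟩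
    · exact Or.inr ⟨y, h, rfl⟩
  have dA := hA.dim hwX hfX
  have dB := hB.dim hwY hfY
  have dC := hC.dim hw hf
  simp only [fun n => (dA n).2, fun n => (dB n).2, fun n => (dC n).2]
  let wC : FreeProd.Alt a b → ℕ := fun z => FreeProd.wt (Sum.elim wX wY) (z.word u v)
  change (FreeProd.gf wC)⁻¹ = (FreeProd.gf fun s => FreeProd.wt wX (u s))⁻¹ +
    (FreeProd.gf fun s => FreeProd.wt wY (v s))⁻¹ - 1
  have finC : ∀ n, Finite {s // wC s = n} := fun n => (dC n).1
  have finsub : ∀ (p : FreeProd.Alt a b → Prop) (n : ℕ),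
      Finite {s : {z // p z} // wC s.1 = n} := by
    intro p n
    have := finC n
    exact Finite.of_injective (fun s => (⟨s.1.1, s.2⟩ : {s // wC s = n})) (by
      rintro ⟨⟨s, _⟩, _⟩ ⟨⟨t, _⟩, _⟩ h
      simp only [Subtype.mk.injEq] at h
      subst h
      rfl)
  have e1 : (FreeProd.gf fun s => FreeProd.wt wX (u s)) *
      FreeProd.gf (fun z : {z : FreeProd.Alt a b // z.NL} => wC z.1) = FreeProd.gf wC := by
    rw [← FreeProd.gf_mul _ _ (fun n => (dA n).1) (finsub _)]
    refine FreeProd.gf_congr _ _ (FreeProd.Alt.EL a b) ?_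
    rintro ⟨s, q⟩
    simp only [wC]
    rw [FreeProd.Alt.word_EL u v hu, FreeProd.wt_append,
      FreeProd.wt_map wX (Sum.elim wX wY) Sum.inl (fun _ => rfl)]
  have e2 : (FreeProd.gf fun s => FreeProd.wt wY (v s)) *
      FreeProd.gf (fun z : {z : FreeProd.Alt a b // z.NR} => wC z.1) = FreeProd.gf wC := by
    rw [← FreeProd.gf_mul _ _ (fun n => (dB n).1) (finsub _)]
    refine FreeProd.gf_congr _ _ (FreeProd.Alt.ER a b) ?_
    rintro ⟨s, q⟩
    simp only [wC]
    rw [FreeProd.Alt.word_ER u v hv, FreeProd.wt_append,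
      FreeProd.wt_map wY (Sum.elim wX wY) Sum.inr (fun _ => rfl)]
  have e3 := FreeProd.gf_add wC finC FreeProd.Alt.NL FreeProd.Alt.NR (FreeProd.Alt.nil a b) rfl
    (by
      rintro ⟨_ | ⟨x | y, l⟩, h⟩
      · left; simp [FreeProd.Alt.NL]
      · right; simp [FreeProd.Alt.NR]
      · left; simp [FreeProd.Alt.NL])
    (by
      rintro ⟨_ | ⟨x | y, l⟩, h⟩
      · simp only [FreeProd.Alt.NL, FreeProd.Alt.NR, FreeProd.Alt.nil, List.head?_nil]
        simp
        rfl
      · refine ⟨fun hh => ?_, fun hh => ?_⟩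
        · simpa using hh.1 _ rfl
        · simpa [FreeProd.Alt.nil] using congrArg Subtype.val hh
      · refine ⟨fun hh => ?_, fun hh => ?_⟩
        · simpa using hh.2 _ rfl
        · simpa [FreeProd.Alt.nil] using congrArg Subtype.val hh)
  have nA := FreeProd.gf_ne _ (fun n => (dA n).1) none (by simp [hu, FreeProd.wt])
  have nB := FreeProd.gf_ne _ (fun n => (dB n).1) none (by simp [hv, FreeProd.wt])
  have nC := FreeProd.gf_ne wC finC (FreeProd.Alt.nil a b) rfl
  generalize (FreeProd.gf fun s => FreeProd.wt wX (u s)) = A at *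
  generalize (FreeProd.gf fun s => FreeProd.wt wY (v s)) = B at *
  generalize FreeProd.gf wC = C at *
  generalize FreeProd.gf (fun z : {z : FreeProd.Alt a b // z.NL} => wC z.1) = Q at *
  generalize FreeProd.gf (fun z : {z : FreeProd.Alt a b // z.NR} => wC z.1) = P at *
  have iA := PowerSeries.mul_inv_cancel A nA
  have iB := PowerSeries.mul_inv_cancel B nB
  have iC := PowerSeries.mul_inv_cancel C nC
  have q1 : Q = C * A⁻¹ := by linear_combination (-A⁻¹) * (-e1) - Q * iA
  have q2 : P = C * B⁻¹ := by linear_combination (-B⁻¹) * (-e2) - P * iB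
  rw [q1, q2] at e3
  linear_combination (-C⁻¹) * e3 + (A⁻¹ + B⁻¹ - 1) * iC
end
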